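/- arXiv:2002.07735 — 2 statements merged into one kernel-verified Lean document; each statement's English description precedes it below -/
import Mathlib

section
/- For every h < h**(d) there exist constants C₁ = C₁(d) > 0 and c = c(d,h) > 0 such that for every integer L ≥ 1 and all x, y ∈ B_L: P[{x} ↔ {y} in {φ^L ≥ h} ∩ B_{2L}] ≥ c L^{−C₁}. -/
open MeasureTheory ProbabilityTheory Filter Set

namespace GFFperc

noncomputable section

/-- The lattice `ℤ^d`. -/
abbrev V (d : ℕ) := Fin d → ℤ

/-- Nearest-neighbour adjacency on `ℤ^d`. -/
def adj {d : ℕ} (x y : V d) : Prop := (∑ i, (x i - y i).natAbs) = 1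

/-- `ℓ∞` distance between two points. -/
def dinf {d : ℕ} (x y : V d) : ℕ := Finset.univ.sup fun i => (x i - y i).natAbs

/-- `A` and `B` are joined by a nearest-neighbour path contained in `S`. -/
def ConnIn {d : ℕ} (S A B : Set (V d)) : Prop :=
  ∃ (n : ℕ) (γ : ℕ → V d), γ 0 ∈ A ∧ γ n ∈ B ∧ (∀ k, k ≤ n → γ k ∈ S) ∧
    ∀ k, k < n → adj (γ k) (γ (k + 1))

/-- A set is connected: any two of its points are joined inside it. -/
def IsConnSet {d : ℕ} (S : Set (V d)) : Prop := ∀ x ∈ S, ∀ y ∈ S, ConnIn S {x} {y}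

/-- The connected component of `x` in `S`. -/
def comp {d : ℕ} (S : Set (V d)) (x : V d) : Set (V d) := {y | ConnIn S {x} {y}}

/-- Box of (real) radius `r` centered at `x`. -/
def boxAt {d : ℕ} (x : V d) (r : ℝ) : Set (V d) := {y | ∀ i, |(y i : ℝ) - (x i : ℝ)| ≤ r}

def box (d : ℕ) (r : ℝ) : Set (V d) := boxAt (0 : V d) r

/-- Inner vertex boundary of the box of radius `r` centered at `x`. -/
def bdryAt {d : ℕ} (x : V d) (r : ℝ) : Set (V d) :=
  {y | y ∈ boxAt x r ∧ ∃ z, z ∉ boxAt x r ∧ adj y z}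

def bdry (d : ℕ) (r : ℝ) : Set (V d) := bdryAt (0 : V d) r

/-- `A` is connected to infinity within `S`. -/
def ConnToInf {d : ℕ} (S A : Set (V d)) : Prop := ∀ R : ℕ, 1 ≤ R → ConnIn S A (bdry d R)

/-- The `ℓ∞`-diameter of `S` is at least `r`. -/
def diamGE {d : ℕ} (S : Set (V d)) (r : ℝ) : Prop := ∃ x ∈ S, ∃ y ∈ S, r ≤ (dinf x y : ℝ)

def unitV (d : ℕ) (i : Fin d) : V d := fun j => if j = i then 1 else 0

/-- `k`-step transition probabilities of simple random walk on `ℤ^d`. -/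
def srwP (d : ℕ) : ℕ → V d → V d → ℝ
  | 0, x, y => if x = y then 1 else 0
  | (k + 1), x, y =>
      (1 / (2 * d)) * ∑ i : Fin d, (srwP d k (x + unitV d i) y + srwP d k (x - unitV d i) y)

/-- Green function of simple random walk on `ℤ^d`. -/
def green (d : ℕ) (x y : V d) : ℝ := ∑' k : ℕ, srwP d k x y

/-- `ℓ`-step transition kernel of the lazy simple random walk on `ℤ^d`. -/
def lazyP (d : ℕ) : ℕ → V d → V d → ℝ
  | 0, x, y => if x = y then 1 else 0
  | (k + 1), x, y =>
      (1 / 2) * lazyP d k x y +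
        (1 / (4 * d)) * ∑ i : Fin d, (lazyP d k (x + unitV d i) y + lazyP d k (x - unitV d i) y)

/-- `φ` is a centered Gaussian field with covariance function `C`: every finite linear
combination is a centered Gaussian variable with the corresponding variance. -/
def IsCGF {Ω : Type*} [MeasurableSpace Ω] {d : ℕ} (P : Measure Ω)
    (φ : V d → Ω → ℝ) (C : V d → V d → ℝ) : Prop :=
  (∀ x, Measurable (φ x)) ∧
    ∀ (s : Finset (V d)) (a : V d → ℝ),
      Measure.map (fun ω => ∑ x ∈ s, a x * φ x ω) P =
        gaussianReal 0 (Real.toNNReal (∑ x ∈ s, ∑ y ∈ s, a x * a y * C x y))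

/-- `φ` is a Gaussian free field on `ℤ^d`. -/
def IsGFF {Ω : Type*} [MeasurableSpace Ω] {d : ℕ} (P : Measure Ω) (φ : V d → Ω → ℝ) : Prop :=
  IsCGF P φ (green d)

/-- The level set `{φ ≥ h}`. -/
def lvl {d : ℕ} {Ω : Type*} (φ : V d → Ω → ℝ) (h : ℝ) (ω : Ω) : Set (V d) := {x | h ≤ φ x ω}

/-- The whole field, as one random variable with values in `V d → ℝ`. -/
def proc {Ω : Type*} {d : ℕ} (φ : V d → Ω → ℝ) : Ω → V d → ℝ := fun ω x => φ x ω

/-- The critical parameter `h_*`. -/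
def hStar (d : ℕ) {Ω : Type*} [MeasurableSpace Ω] (P : Measure Ω) (φ : V d → Ω → ℝ) : ℝ :=
  sInf {h : ℝ | P {ω | ConnToInf (lvl φ h ω) {(0 : V d)}} = 0}

/-- The critical parameter `h_{**}`. -/
def hStarStar (d : ℕ) {Ω : Type*} [MeasurableSpace Ω] (P : Measure Ω) (φ : V d → Ω → ℝ) : ℝ :=
  sInf {h : ℝ |
    (⨅ R : ℕ, P {ω | ConnIn (lvl φ h ω) (box d ((R : ℝ) + 1)) (bdry d (2 * ((R : ℝ) + 1)))}) = 0}

/-- `u(R) = exp((log R)^{1/3})`. -/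
def ufn (R : ℝ) : ℝ := Real.exp (Real.log R ^ ((1 : ℝ) / 3))

def tildeSet (d : ℕ) {Ω : Type*} [MeasurableSpace Ω] (P : Measure Ω) (φ : V d → Ω → ℝ) :
    Set ℝ :=
  {h : ℝ |
    (⨅ R : ℕ, ENNReal.ofReal (((R : ℝ) + 1) ^ d) *
        P {ω | ¬ ConnIn (lvl φ h ω) (box d (ufn ((R : ℝ) + 1))) (bdry d ((R : ℝ) + 1))}) = 0}

/-- The critical parameter `h̃`. -/
def hTilde (d : ℕ) {Ω : Type*} [MeasurableSpace Ω] (P : Measure Ω) (φ : V d → Ω → ℝ) : ℝ :=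
  sSup (tildeSet d P φ)

/-- The event `Exist(R,α)`. -/
def ExistEv (d : ℕ) {Ω : Type*} (φ : V d → Ω → ℝ) (R : ℕ) (α : ℝ) : Set Ω :=
  {ω | ∃ x ∈ lvl φ α ω ∩ box d (R : ℝ),
    diamGE (comp (lvl φ α ω ∩ box d (R : ℝ)) x) ((R : ℝ) / 5)}

/-- The event `Unique(R,α)`. -/
def UniqueEv (d : ℕ) {Ω : Type*} (φ : V d → Ω → ℝ) (R : ℕ) (α : ℝ) : Set Ω :=
  {ω | ∀ x ∈ lvl φ α ω ∩ box d (R : ℝ), ∀ y ∈ lvl φ α ω ∩ box d (R : ℝ),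
    diamGE (comp (lvl φ α ω ∩ box d (R : ℝ)) x) ((R : ℝ) / 10) →
    diamGE (comp (lvl φ α ω ∩ box d (R : ℝ)) y) ((R : ℝ) / 10) →
    ConnIn (lvl φ α ω ∩ box d (2 * (R : ℝ))) {x} {y}}

/-- `φ` strongly percolates up to level `h`. -/
def StronglyPerc (d : ℕ) {Ω : Type*} [MeasurableSpace Ω] (P : Measure Ω)
    (φ : V d → Ω → ℝ) (h : ℝ) : Prop :=
  ∃ c : ℝ, 0 < c ∧ ∃ ρ : ℝ, ρ ∈ Set.Ioc (0 : ℝ) 1 ∧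
    ∀ α : ℝ, α ≤ h → ∀ R : ℕ, 1 ≤ R →
      ENNReal.ofReal (1 - Real.exp (-c * (R : ℝ) ^ ρ)) ≤ P (ExistEv d φ R α) ∧
      ENNReal.ofReal (1 - Real.exp (-c * (R : ℝ) ^ ρ)) ≤ P (UniqueEv d φ R α)

/-- The critical parameter `h̄`. -/
def hBar (d : ℕ) {Ω : Type*} [MeasurableSpace Ω] (P : Measure Ω) (φ : V d → Ω → ℝ) : ℝ :=
  sSup {h : ℝ | StronglyPerc d P φ h}


/-- Covariance of the truncated field `φ^L`. -/
def covTrunc (d L : ℕ) (x y : V d) : ℝ := (1 / 2) * ∑ ℓ ∈ Finset.range (L + 1), lazyP d ℓ x y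

/-- Covariance of the tail field `φ - φ^L`. -/
def covTail (d L : ℕ) (x y : V d) : ℝ := (1 / 2) * ∑' ℓ : ℕ, lazyP d (ℓ + L + 1) x y

/-- The truncated fields `φ^L` are coupled with `φ` so that, for each `L`, `φ^L` and
`φ - φ^L` are independent centered Gaussian fields with the stated covariances. -/
def IsTruncCoupling (d : ℕ) {Ω : Type*} [MeasurableSpace Ω] (P : Measure Ω)
    (φ : V d → Ω → ℝ) (φL : ℕ → V d → Ω → ℝ) : Prop :=
  ∀ L : ℕ, IsCGF P (φL L) (covTrunc d L) ∧
    IsCGF P (fun x ω => φ x ω - φL L x ω) (covTail d L) ∧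
    IndepFun (proc (φL L)) (proc fun x ω => φ x ω - φL L x ω) P

/-- Box with integer radius `r` centered at `x`. -/
def boxI {d : ℕ} (x : V d) (r : ℕ) : Set (V d) := {y | ∀ i, (y i - x i).natAbs ≤ r}

section PartA1

/-- lattice isometries -/
def isoT {d : ℕ} (τ : Equiv.Perm (Fin d)) (s : Fin d → ℤ) (a : V d) (x : V d) : V d :=
  fun i => s i * x (τ i) + a i

lemma isoT_inj {d : ℕ} (τ : Equiv.Perm (Fin d)) (s : Fin d → ℤ) (hs : ∀ i, s i = 1 ∨ s i = -1)
    (a : V d) : Function.Injective (isoT τ s a) := by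
  intro x y h
  funext j
  have := congrFun h (τ.symm j)
  simp only [isoT, Equiv.apply_symm_apply] at this
  rcases hs (τ.symm j) with h1 | h1 <;> rw [h1] at this <;> linarith

lemma isoT_add {d : ℕ} (τ : Equiv.Perm (Fin d)) (s : Fin d → ℤ)
    (a : V d) (x : V d) (i : Fin d) (h : s i = 1) :
    isoT τ s a (x + unitV d (τ i)) = isoT τ s a x + unitV d i ∧
    isoT τ s a (x - unitV d (τ i)) = isoT τ s a x - unitV d i := by
  constructor <;> funext j <;> by_cases hj : j = i <;>
    simp [isoT, unitV, hj, h] <;> ring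

lemma isoT_sub {d : ℕ} (τ : Equiv.Perm (Fin d)) (s : Fin d → ℤ)
    (a : V d) (x : V d) (i : Fin d) (h : s i = -1) :
    isoT τ s a (x + unitV d (τ i)) = isoT τ s a x - unitV d i ∧
    isoT τ s a (x - unitV d (τ i)) = isoT τ s a x + unitV d i := by
  constructor <;> funext j <;> by_cases hj : j = i <;>
    simp [isoT, unitV, hj, h] <;> ring

lemma lazyP_iso {d : ℕ} (τ : Equiv.Perm (Fin d)) (s : Fin d → ℤ) (hs : ∀ i, s i = 1 ∨ s i = -1)
    (a : V d) (k : ℕ) (x y : V d) :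
    lazyP d k (isoT τ s a x) (isoT τ s a y) = lazyP d k x y := by
  induction k generalizing x with
  | zero => simp [lazyP, (isoT_inj τ s hs a).eq_iff]
  | succ k ih =>
    simp only [lazyP, ih]
    congr 2
    rw [← Equiv.sum_comp τ (fun i => lazyP d k (x + unitV d i) y + lazyP d k (x - unitV d i) y)]
    refine Finset.sum_congr rfl fun i _ => ?_
    rcases hs i with h | h
    · rw [← (isoT_add τ s a x i h).1, ← (isoT_add τ s a x i h).2, ih, ih]
    · rw [← (isoT_sub τ s a x i h).1, ← (isoT_sub τ s a x i h).2, ih, ih, add_comm]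

lemma adj_iso {d : ℕ} (τ : Equiv.Perm (Fin d)) (s : Fin d → ℤ) (hs : ∀ i, s i = 1 ∨ s i = -1)
    (a : V d) (x y : V d) (h : adj x y) : adj (isoT τ s a x) (isoT τ s a y) := by
  unfold adj at *
  rw [← h, ← Equiv.sum_comp τ (fun i => (x i - y i).natAbs)]
  refine Finset.sum_congr rfl fun i _ => ?_
  simp only [isoT]
  rcases hs i with h | h <;> rw [h] <;> omega

lemma lazyP_symm {d : ℕ} (k : ℕ) (x y : V d) : lazyP d k x y = lazyP d k y x := by
  have := lazyP_iso (Equiv.refl _) (fun _ => -1) (fun _ => Or.inr rfl) (x + y) k x y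
  rw [← this]
  congr 1 <;> funext i <;> simp [isoT]

lemma lazyP_diag {d : ℕ} (k : ℕ) (x : V d) : lazyP d k x x = lazyP d k 0 0 := by
  have := lazyP_iso (Equiv.refl _) (fun _ => 1) (fun _ => Or.inl rfl) x k 0 0
  rw [← this]
  congr 1 <;> funext i <;> simp [isoT]

lemma lazyP_nonneg {d : ℕ} (k : ℕ) (x y : V d) : 0 ≤ lazyP d k x y := by
  induction k generalizing x with
  | zero => simp only [lazyP]; split_ifs <;> norm_num
  | succ k ih =>
    simp only [lazyP]
    have := fun z => ih z
    refine add_nonneg (mul_nonneg (by norm_num) (ih x)) (mul_nonneg (by positivity) ?_)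
    exact Finset.sum_nonneg fun i _ => add_nonneg (ih _) (ih _)

/-- the one-step averaging operator -/
def Qop {d : ℕ} (f : V d → ℝ) (x : V d) : ℝ :=
  (1 / 2) * f x + (1 / (4 * d)) * ∑ i : Fin d, (f (x + unitV d i) + f (x - unitV d i))

lemma lazyP_succ {d : ℕ} (k : ℕ) (x y : V d) :
    lazyP d (k+1) x y = Qop (fun z => lazyP d k z y) x := rfl

lemma lazyP_succ2 {d : ℕ} (k : ℕ) (x y : V d) :
    lazyP d (k+2) x y = Qop (fun z => Qop (fun w => lazyP d k z w) y) x := by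
  rw [lazyP_succ]
  congr 1
  funext z
  rw [lazyP_symm, lazyP_succ]
  congr 1
  funext w
  rw [lazyP_symm]

/-- measure on the torus -/
def tor (d : ℕ) : Measure (Fin d → ℝ) :=
  Measure.pi fun _ => (volume.restrict (Set.Ioc (-Real.pi) Real.pi))

instance (d : ℕ) : IsFiniteMeasure (tor d) := by unfold tor; infer_instance

def symb {d : ℕ} (θ : Fin d → ℝ) : ℝ := 1 / 2 + (1 / (2 * d)) * ∑ i, Real.cos (θ i)

lemma symb_le {d : ℕ} (θ : Fin d → ℝ) (hd : 0 < d) :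
    symb θ = 1 - (1 / (2 * d)) * ∑ i, (1 - Real.cos (θ i)) := by
  have : (d : ℝ) ≠ 0 := by positivity
  simp [symb, Finset.sum_sub_distrib]; field_simp; ring

lemma symb_nonneg {d : ℕ} (θ : Fin d → ℝ) (hd : 0 < d) : 0 ≤ symb θ := by
  have h : - (d : ℝ) ≤ ∑ i, Real.cos (θ i) := by
    have := Finset.sum_le_sum (s := Finset.univ) fun i (_ : i ∈ Finset.univ) =>
      Real.neg_one_le_cos (θ i)
    simpa using this
  have : (d : ℝ) > 0 := by positivity
  unfold symb
  have h2 : (1 / (2 * (d:ℝ))) * (- d) ≤ (1 / (2 * d)) * ∑ i, Real.cos (θ i) := by gcongr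
  have h3 : (1 / (2 * (d:ℝ))) * (- d) = - (1/2) := by field_simp
  linarith

lemma int_exp (n : ℤ) : ∫ t in Set.Ioc (-Real.pi) Real.pi, Complex.exp (Complex.I * (n * t)) =
    if n = 0 then (2 * Real.pi : ℂ) else 0 := by
  rw [← intervalIntegral.integral_of_le (by linarith [Real.pi_pos])]
  split_ifs with h
  · simp [h]; ring
  · have hc : (Complex.I * n) ≠ 0 := by simp [h]
    have := integral_exp_mul_complex (a := -Real.pi) (b := Real.pi) hc
    simp_rw [← mul_assoc]
    rw [this, div_eq_zero_iff]
    left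
    rw [sub_eq_zero, Complex.exp_eq_exp_iff_exists_int]
    refine ⟨n, ?_⟩
    push_cast; ring

lemma int_cos {d : ℕ} (n : V d) : ∫ θ, Real.cos (∑ i, n i * θ i) ∂(tor d) =
    if n = 0 then (2 * Real.pi) ^ d else 0 := by
  have h1 : ∀ θ : Fin d → ℝ, Real.cos (∑ i, n i * θ i) =
      (∏ i, Complex.exp (Complex.I * (n i * θ i))).re := by
    intro θ
    rw [← Complex.exp_sum, ← Finset.mul_sum, mul_comm, ← Complex.exp_ofReal_mul_I_re]
    push_cast
    rfl
  have h2 : ∫ θ, (∏ i, Complex.exp (Complex.I * (n i * (θ i : ℝ)))) ∂(tor d) =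
    ∏ i, (if n i = 0 then (2 * Real.pi : ℂ) else 0) := by
    unfold tor
    rw [integral_fintype_prod_eq_prod (𝕜 := ℂ)
      (f := fun i (t : ℝ) => Complex.exp (Complex.I * (n i * t)))]
    exact Finset.prod_congr rfl fun i _ => int_exp (n i)
  have hi : Integrable (fun θ : Fin d → ℝ => ∏ i, Complex.exp (Complex.I * (n i * (θ i : ℝ))))
      (tor d) := by
    refine Integrable.of_bound (C := 1) (Continuous.aestronglyMeasurable (by fun_prop)) (ae_of_all _ fun θ => ?_)
    rw [← Complex.exp_sum, ← Finset.mul_sum, mul_comm]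
    have : (∑ i, (n i : ℂ) * (θ i : ℂ)) = ((∑ i, n i * θ i : ℝ) : ℂ) := by push_cast; rfl
    rw [this, Complex.norm_exp_ofReal_mul_I]
  simp_rw [h1]
  have := integral_re hi
  simp only [RCLike.re_eq_complex_re] at this
  rw [this, h2]
  split_ifs with h
  · simp [h]
    norm_cast
  · have : ∃ i, n i ≠ 0 := by
      by_contra hc; push Not at hc; exact h (funext hc)
    obtain ⟨i, hi⟩ := this
    rw [Finset.prod_eq_zero (Finset.mem_univ i) (by simp [hi])]; simp

lemma cont_symb {d : ℕ} : Continuous (symb (d := d)) := by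
  unfold symb; fun_prop

lemma abs_symb_le {d : ℕ} (hd : 0 < d) (θ : Fin d → ℝ) : |symb θ| ≤ 1 := by
  rw [abs_of_nonneg (symb_nonneg θ hd), symb_le θ hd]
  have : 0 ≤ (1 / (2 * (d:ℝ))) * ∑ i, (1 - Real.cos (θ i)) :=
    mul_nonneg (by positivity) (Finset.sum_nonneg fun i _ => by linarith [Real.cos_le_one (θ i)])
  linarith

lemma integrable_sc {d : ℕ} (hd : 0 < d) (k : ℕ) (n : V d) :
    Integrable (fun θ => symb θ ^ k * Real.cos (∑ i, n i * θ i)) (tor d) := by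
  have := cont_symb (d := d)
  refine Integrable.of_bound (C := 1) (Continuous.aestronglyMeasurable (by fun_prop))
    (ae_of_all _ fun θ => ?_)
  rw [norm_mul, norm_pow]
  exact mul_le_one₀ (pow_le_one₀ (norm_nonneg _) (abs_symb_le hd θ)) (norm_nonneg _)
    (Real.abs_cos_le_one _)

lemma lazyP_fourier {d : ℕ} (hd : 0 < d) (k : ℕ) (x y : V d) :
    (2 * Real.pi) ^ d * lazyP d k x y =
      ∫ θ, symb θ ^ k * Real.cos (∑ i, ((x - y) i : ℤ) * θ i) ∂(tor d) := by
  induction k generalizing x with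
  | zero =>
    simp only [pow_zero, one_mul, int_cos, lazyP, sub_eq_zero]
    split_ifs <;> simp
  | succ k ih =>
    have hi := fun z : V d => integrable_sc hd k (z - y)
    have : (2 * Real.pi) ^ d * lazyP d (k+1) x y = (1 / 2) * ((2 * Real.pi) ^ d * lazyP d k x y) +
        (1 / (4 * d)) * ∑ i : Fin d, ((2 * Real.pi) ^ d * lazyP d k (x + unitV d i) y
          + (2 * Real.pi) ^ d * lazyP d k (x - unitV d i) y) := by
      simp only [lazyP, ← mul_add, ← Finset.mul_sum]; ring
    rw [this]
    simp_rw [ih]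
    simp_rw [← integral_add (hi _) (hi _)]
    have hi2 : ∀ i ∈ (Finset.univ : Finset (Fin d)), Integrable (fun a : Fin d → ℝ =>
        symb a ^ k * Real.cos (∑ j, ((x + unitV d i - y) j : ℤ) * a j) +
        symb a ^ k * Real.cos (∑ j, ((x - unitV d i - y) j : ℤ) * a j)) (tor d) :=
      fun i _ => (hi _).add (hi _)
    rw [← integral_finsetSum _ hi2, ← integral_const_mul,
      ← integral_const_mul, ← integral_add ((hi _).const_mul _)
      ((integrable_finsetSum _ hi2).const_mul _)]
    congr 1
    funext θ
    have h3 : ∀ i, (∑ j, ((x + unitV d i - y) j : ℤ) * θ j) =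
        (∑ j, ((x - y) j : ℤ) * θ j) + θ i := by
      intro i
      have : ∀ j, (((x + unitV d i - y) j : ℤ) : ℝ) * θ j = ((x - y) j : ℤ) * θ j +
        if j = i then θ j else 0 := by
        intro j; by_cases hj : j = i <;> simp [unitV, hj]; ring
      simp_rw [this, Finset.sum_add_distrib]; simp
    have h4 : ∀ i, (∑ j, ((x - unitV d i - y) j : ℤ) * θ j) =
        (∑ j, ((x - y) j : ℤ) * θ j) - θ i := by
      intro i
      have : ∀ j, (((x - unitV d i - y) j : ℤ) : ℝ) * θ j = ((x - y) j : ℤ) * θ j -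
        if j = i then θ j else 0 := by
        intro j; by_cases hj : j = i <;> simp [unitV, hj]; ring
      simp_rw [this, Finset.sum_sub_distrib]; simp
    simp_rw [h3, h4, Real.cos_add, Real.cos_sub]
    have h5 : ∀ i : Fin d, ∀ A B : ℝ, symb θ ^ k * (A * Real.cos (θ i) - B * Real.sin (θ i)) +
      symb θ ^ k * (A * Real.cos (θ i) + B * Real.sin (θ i)) =
        (2 * symb θ ^ k * A) * Real.cos (θ i) := by intros; ring
    simp_rw [h5, ← Finset.mul_sum]
    rw [pow_succ]
    have hs : symb θ = 1 / 2 + (1 / (2 * d)) * ∑ i, Real.cos (θ i) := rfl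
    generalize symb θ ^ k = A
    rw [hs]
    ring

lemma lazyP_bound {d : ℕ} (hd : 3 ≤ d) : ∃ K : ℝ, 0 < K ∧ ∀ (k : ℕ) (x y : V d), 1 ≤ k →
    lazyP d k x y ≤ K * (k : ℝ) ^ (-(3 / 2 : ℝ)) := by
  have hd0 : 0 < d := by omega
  have hdR : (0 : ℝ) < d := by positivity
  set c : ℝ := 1 / (d * Real.pi ^ 2) with hc
  have hc0 : 0 < c := by have := Real.pi_pos; positivity
  refine ⟨(√(Real.pi / c)) ^ d, by have := Real.pi_pos; positivity, fun k x y hk => ?_⟩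
  have hk0 : (0 : ℝ) < k := by positivity
  have hk1 : (1 : ℝ) ≤ k := by exact_mod_cast hk
  have hpi := Real.pi_gt_three
  have h1 : lazyP d k x y ≤ (2 * Real.pi) ^ d * lazyP d k x y :=
    le_mul_of_one_le_left (lazyP_nonneg _ _ _) (one_le_pow₀ (by linarith))
  refine h1.trans ?_
  rw [lazyP_fourier hd0]
  have hig : ∀ b > 0, Integrable (fun t : ℝ => Real.exp (-b * t ^ 2))
      (volume.restrict (Set.Ioc (-Real.pi) Real.pi)) := fun b hb =>
    (integrable_exp_neg_mul_sq hb).restrict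
  have h2 : ∫ θ, symb θ ^ k * Real.cos (∑ i, ((x - y) i : ℤ) * θ i) ∂(tor d) ≤
      ∫ θ, ∏ i, Real.exp (-(c * k) * (θ i) ^ 2) ∂(tor d) := by
    refine integral_mono_ae (integrable_sc hd0 k _) ?_ ?_
    · unfold tor
      exact Integrable.fintype_prod (f := fun i (t : ℝ) => Real.exp (-(c * k) * t ^ 2))
        (fun i => hig _ (by positivity))
    · have hae : ∀ᵐ θ ∂(tor d), ∀ i, θ i ∈ Set.Ioc (-Real.pi) Real.pi := by
        rw [ae_all_iff]
        intro i
        have := (Measure.quasiMeasurePreserving_eval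
          (μ := fun _ : Fin d => (volume.restrict (Set.Ioc (-Real.pi) Real.pi))) i).ae
            (ae_restrict_mem measurableSet_Ioc)
        exact this
      filter_upwards [hae] with θ hθ
      have h3 : symb θ ≤ Real.exp (- ∑ i, c * (θ i) ^ 2) := by
        rw [symb_le θ hd0]
        refine le_trans ?_ (Real.add_one_le_exp _)
        have : ∑ i, c * (θ i) ^ 2 ≤ (1 / (2 * (d:ℝ))) * ∑ i, (1 - Real.cos (θ i)) := by
          rw [Finset.mul_sum]
          refine Finset.sum_le_sum fun i _ => ?_
          have h5 := Real.cos_le_one_sub_mul_cos_sq (x := θ i) (abs_le.2 ⟨(hθ i).1.le, (hθ i).2⟩)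
          have h6 : 2 / Real.pi ^ 2 * θ i ^ 2 ≤ 1 - Real.cos (θ i) := by linarith
          have h7 : (1 / (2 * (d:ℝ))) * (2 / Real.pi ^ 2 * θ i ^ 2) ≤
            (1 / (2 * (d:ℝ))) * (1 - Real.cos (θ i)) := by gcongr
          refine le_trans (le_of_eq ?_) h7
          rw [hc]; field_simp
        linarith
      calc symb θ ^ k * Real.cos (∑ i, ((x - y) i : ℤ) * θ i) ≤ symb θ ^ k * 1 := by
            have := pow_nonneg (symb_nonneg θ hd0) k
            gcongr; exact Real.cos_le_one _
        _ ≤ (Real.exp (- ∑ i, c * (θ i) ^ 2)) ^ k := by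
            rw [mul_one]; exact pow_le_pow_left₀ (symb_nonneg θ hd0) h3 k
        _ = _ := by
            rw [← Real.exp_sum, ← Real.exp_nat_mul, ← Finset.sum_neg_distrib, Finset.mul_sum]
            congr 1; refine Finset.sum_congr rfl fun i _ => by ring
  refine h2.trans ?_
  unfold tor
  rw [integral_fintype_prod_eq_prod (𝕜 := ℝ)
      (f := fun i (t : ℝ) => Real.exp (-(c * k) * t ^ 2))]
  rw [Finset.prod_const, Finset.card_univ, Fintype.card_fin]
  have h8 : ∫ t in Set.Ioc (-Real.pi) Real.pi, Real.exp (-(c * k) * t ^ 2) ≤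
      √(Real.pi / c) * (k : ℝ) ^ (-(1 / 2 : ℝ)) := by
    refine (setIntegral_le_integral (integrable_exp_neg_mul_sq (by positivity))
      (ae_of_all _ fun t => (Real.exp_pos _).le)).trans ?_
    rw [integral_gaussian, ← div_div, Real.sqrt_div (by positivity), Real.rpow_neg hk0.le,
      ← Real.sqrt_eq_rpow]
    rfl
  have h9 : 0 ≤ ∫ t in Set.Ioc (-Real.pi) Real.pi, Real.exp (-(c * k) * t ^ 2) :=
    integral_nonneg fun t => (Real.exp_pos _).le
  refine (pow_le_pow_left₀ h9 h8 d).trans ?_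
  rw [mul_pow]
  refine mul_le_mul_of_nonneg_left ?_ (by positivity)
  rw [← Real.rpow_natCast, ← Real.rpow_mul hk0.le]
  refine Real.rpow_le_rpow_of_exponent_le hk1 ?_
  have : (3 : ℝ) ≤ d := by exact_mod_cast hd
  linarith

end PartA1

section PartA2

lemma summable_lazyP {d : ℕ} (hd : 3 ≤ d) (x y : V d) : Summable fun k => lazyP d k x y := by
  obtain ⟨K, hK, h⟩ := lazyP_bound hd
  rw [← summable_nat_add_iff 1]
  have hs : Summable fun k : ℕ => K * ((k + 1 : ℕ) : ℝ) ^ (-(3 / 2 : ℝ)) :=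
    ((summable_nat_add_iff 1).2 (Real.summable_nat_rpow.2 (by norm_num))).mul_left K
  exact Summable.of_nonneg_of_le (fun k => lazyP_nonneg _ _ _) (fun k => h _ _ _ (by omega)) hs

lemma covTail_le {d : ℕ} (hd : 3 ≤ d) : ∃ K : ℝ, 0 < K ∧ ∀ (L : ℕ) (x : V d), 1 ≤ L →
    covTail d L x x ≤ K * (L : ℝ) ^ (-(1 / 4 : ℝ)) := by
  obtain ⟨K, hK, h⟩ := lazyP_bound hd
  have hs0 : Summable fun k : ℕ => (k : ℝ) ^ (-(5 / 4 : ℝ)) :=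
    (Real.summable_nat_rpow.2 (by norm_num))
  set S := ∑' k : ℕ, (k : ℝ) ^ (-(5 / 4 : ℝ)) with hS
  have hS1 : 0 < S := by
    refine hs0.tsum_pos (fun i => by positivity) 1 (by norm_num)
  refine ⟨(1/2) * (K * S), by positivity, fun L x hL => ?_⟩
  have hL0 : (0 : ℝ) < L := by positivity
  unfold covTail
  rw [mul_assoc]
  gcongr
  have hsum : Summable fun k : ℕ => ((k + L + 1 : ℕ) : ℝ) ^ (-(5 / 4 : ℝ)) :=
    (summable_nat_add_iff (f := fun k : ℕ => (k : ℝ) ^ (-(5 / 4 : ℝ))) (L+1)).2 hs0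
  have h1 : ∀ k, lazyP d (k + L + 1) x x ≤ K * (L : ℝ) ^ (-(1 / 4 : ℝ)) *
      ((k + L + 1 : ℕ) : ℝ) ^ (-(5 / 4 : ℝ)) := by
    intro k
    refine (h _ _ _ (by omega)).trans ?_
    rw [mul_assoc]
    gcongr
    rw [show (-(3/2) : ℝ) = -(1/4) + -(5/4) by norm_num, Real.rpow_add (by positivity)]
    have hle : (L : ℝ) ≤ ((k + L + 1 : ℕ) : ℝ) := by
      push_cast; linarith [(k.cast_nonneg : (0:ℝ) ≤ k)]
    have := Real.rpow_le_rpow_of_nonpos hL0 hle (show (-(1/4) : ℝ) ≤ 0 by norm_num)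
    exact mul_le_mul_of_nonneg_right this (by positivity)
  have hs1 : Summable fun k => lazyP d (k + L + 1) x x :=
    (summable_nat_add_iff (f := fun k => lazyP d k x x) (L+1)).2 (summable_lazyP hd x x)
  refine (hs1.tsum_le_tsum h1 (hsum.mul_left _)).trans ?_
  rw [tsum_mul_left]
  have h2 : ∑' k : ℕ, ((k + L + 1 : ℕ) : ℝ) ^ (-(5 / 4 : ℝ)) ≤ S :=
    tsum_comp_le_tsum_of_inj hs0 (fun i => by positivity)
      (i := fun k => k + L + 1) (fun a b hab => by simpa using hab)
  calc _ ≤ K * (L : ℝ) ^ (-(1 / 4 : ℝ)) * S := by gcongr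
    _ = _ := by ring

def Gf (d : ℕ) (x y : V d) : ℝ := covTrunc d 0 x y + covTail d 0 x y

lemma Gf_eq {d : ℕ} (hd : 3 ≤ d) (x y : V d) : Gf d x y = (1/2) * ∑' k, lazyP d k x y := by
  rw [(summable_lazyP hd x y).tsum_eq_zero_add]
  simp [Gf, covTrunc, covTail]
  ring

lemma Gf_green {d : ℕ} (hd : 3 ≤ d) (x y : V d) :
    Gf d x y - (1 / (2 * d)) * ∑ i : Fin d, (Gf d (x + unitV d i) y + Gf d (x - unitV d i) y) =
      if x = y then 1 else 0 := by
  simp_rw [Gf_eq hd]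
  have hs := fun z => (summable_lazyP hd z y)
  have h1 : ∑' k, lazyP d k x y = (if x = y then 1 else 0) + ((1 / 2) * ∑' k, lazyP d k x y +
      (1 / (4 * d)) * ∑ i : Fin d, (∑' k, lazyP d k (x + unitV d i) y +
        ∑' k, lazyP d k (x - unitV d i) y)) := by
    conv_lhs => rw [(hs x).tsum_eq_zero_add]
    congr 1
    have : HasSum (fun k => lazyP d (k+1) x y) ((1 / 2) * ∑' k, lazyP d k x y +
      (1 / (4 * d)) * ∑ i : Fin d, (∑' k, lazyP d k (x + unitV d i) y +
        ∑' k, lazyP d k (x - unitV d i) y)) := by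
      simp only [lazyP]
      exact ((hs x).hasSum.mul_left _).add ((hasSum_sum fun i _ =>
        ((hs _).hasSum.add (hs _).hasSum)).mul_left _)
    exact this.tsum_eq
  simp_rw [← mul_add, ← Finset.mul_sum]
  have hd' : (d : ℝ) ≠ 0 := by
    have : 0 < d := by omega
    positivity
  generalize (∑ i : Fin d, (∑' k, lazyP d k (x + unitV d i) y +
        ∑' k, lazyP d k (x - unitV d i) y)) = A at *
  generalize ∑' k, lazyP d k x y = B at *
  have : (1 / (2 * (d:ℝ))) = 2 * (1 / (4 * d)) := by field_simp; ring
  rw [this]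
  linarith

/-- positive factorisation -/
def Fac {d : ℕ} (Λ : Finset (V d)) (C : V d → V d → ℝ) : Prop :=
  ∃ (ι : Type) (_ : Fintype ι) (v : ι → V d → ℝ), (∀ j x, 0 ≤ v j x) ∧
    ∀ x ∈ Λ, ∀ y ∈ Λ, C x y = ∑ j, v j x * v j y

lemma Fac.add {d : ℕ} {Λ : Finset (V d)} {C C' : V d → V d → ℝ} (h : Fac Λ C) (h' : Fac Λ C') :
    Fac Λ (fun x y => C x y + C' x y) := by
  obtain ⟨ι, _, v, hv, hC⟩ := h
  obtain ⟨κ, _, w, hw, hC'⟩ := h'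
  refine ⟨ι ⊕ κ, inferInstance, Sum.elim v w, ?_, ?_⟩
  · rintro (j | j) x
    · exact hv j x
    · exact hw j x
  · intro x hx y hy
    simp [hC x hx y hy, hC' x hx y hy]

lemma Fac.zero {d : ℕ} {Λ : Finset (V d)} : Fac Λ (fun _ _ => (0:ℝ)) :=
  ⟨Empty, inferInstance, fun _ _ => 0, fun _ _ => le_rfl, fun _ _ _ _ => by simp⟩

lemma Fac.smul {d : ℕ} {Λ : Finset (V d)} {C : V d → V d → ℝ} (h : Fac Λ C) {c : ℝ} (hc : 0 ≤ c) :
    Fac Λ (fun x y => c * C x y) := by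
  obtain ⟨ι, _, v, hv, hC⟩ := h
  refine ⟨ι, inferInstance, fun j x => √c * v j x, fun j x => mul_nonneg (by positivity) (hv j x),
    fun x hx y hy => ?_⟩
  beta_reduce
  rw [hC x hx y hy, Finset.mul_sum]
  refine Finset.sum_congr rfl fun j _ => ?_
  nth_rw 1 [← Real.mul_self_sqrt hc]; ring

lemma Fac.sum {d : ℕ} {Λ : Finset (V d)} {C : ℕ → V d → V d → ℝ} (s : Finset ℕ)
    (h : ∀ k, Fac Λ (C k)) : Fac Λ (fun x y => ∑ k ∈ s, C k x y) := by
  classical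
  induction s using Finset.induction_on with
  | empty => simpa using Fac.zero
  | insert a s ha ih =>
    simp_rw [Finset.sum_insert ha]
    exact (h a).add ih

def nbh {d : ℕ} (Λ : Finset (V d)) : Finset (V d) :=
  Λ ∪ (Finset.univ.biUnion fun i => Λ.image (· + unitV d i)) ∪
    (Finset.univ.biUnion fun i => Λ.image (· - unitV d i))

lemma mem_nbh {d : ℕ} {Λ : Finset (V d)} {x : V d} (hx : x ∈ Λ) :
    x ∈ nbh Λ ∧ ∀ i, x + unitV d i ∈ nbh Λ ∧ x - unitV d i ∈ nbh Λ := by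
  unfold nbh
  refine ⟨by simp [hx], fun i => ⟨?_, ?_⟩⟩
  · refine Finset.mem_union_left _ (Finset.mem_union_right _ ?_)
    exact Finset.mem_biUnion.2 ⟨i, Finset.mem_univ _, Finset.mem_image_of_mem _ hx⟩
  · refine (Finset.mem_union_right _ ?_)
    exact Finset.mem_biUnion.2 ⟨i, Finset.mem_univ _, Finset.mem_image_of_mem _ hx⟩

lemma Qop_congr {d : ℕ} {Λ : Finset (V d)} {f g : V d → ℝ} {x : V d} (hx : x ∈ Λ)
    (h : ∀ z ∈ nbh Λ, f z = g z) : Qop f x = Qop g x := by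
  have := mem_nbh hx
  unfold Qop
  rw [h _ this.1]
  congr 2
  exact Finset.sum_congr rfl fun i _ => by rw [h _ (this.2 i).1, h _ (this.2 i).2]

lemma Qop_sum {d : ℕ} {ι : Type} [Fintype ι] (c : ι → ℝ) (v : ι → V d → ℝ) (x : V d) :
    Qop (fun w => ∑ j, c j * v j w) x = ∑ j, c j * Qop (v j) x := by
  simp only [Qop, mul_add, Finset.sum_add_distrib, Finset.mul_sum]
  congr 1
  · exact Finset.sum_congr rfl fun j _ => by ring
  congr 1
  · rw [Finset.sum_comm]; exact Finset.sum_congr rfl fun j _ => Finset.sum_congr rfl fun _ _ => by ring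
  · rw [Finset.sum_comm]; exact Finset.sum_congr rfl fun j _ => Finset.sum_congr rfl fun _ _ => by ring

lemma Qop_nonneg {d : ℕ} {f : V d → ℝ} (hf : ∀ x, 0 ≤ f x) (x : V d) : 0 ≤ Qop f x :=
  add_nonneg (mul_nonneg (by norm_num) (hf x)) (mul_nonneg (by positivity)
    (Finset.sum_nonneg fun _ _ => add_nonneg (hf _) (hf _)))

lemma Fac.step {d : ℕ} {Λ : Finset (V d)} {C : V d → V d → ℝ} (h : Fac (nbh Λ) C) :
    Fac Λ (fun x y => Qop (fun z => Qop (fun w => C z w) y) x) := by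
  obtain ⟨ι, _, v, hv, hC⟩ := h
  refine ⟨ι, inferInstance, fun j => Qop (v j), fun j x => Qop_nonneg (hv j) x,
    fun x hx y hy => ?_⟩
  have h1 : ∀ z ∈ nbh Λ, Qop (fun w => C z w) y = ∑ j, v j z * Qop (v j) y := by
    intro z hz
    rw [← Qop_sum]
    exact Qop_congr hy fun w hw => hC z hz w hw
  beta_reduce
  rw [Qop_congr hx h1]
  simp_rw [mul_comm (v _ _)]
  rw [Qop_sum]
  exact Finset.sum_congr rfl fun j _ => by ring

lemma Fac_lazy {d : ℕ} (hd : 0 < d) (k : ℕ) (Λ : Finset (V d)) : Fac Λ (lazyP d k) := by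
  induction k using Nat.twoStepInduction generalizing Λ with
  | zero =>
    refine ⟨Λ, inferInstance, fun z x => if x = z then 1 else 0, ?_, ?_⟩
    · intro j x; beta_reduce; split_ifs <;> norm_num
    · intro x hx y hy
      rw [Finset.sum_coe_sort Λ (fun z => (if x = z then (1:ℝ) else 0) * (if y = z then 1 else 0))]
      simp [lazyP, hy]
  | one =>
    refine ⟨Fin d × nbh Λ, inferInstance, fun p x => √(1/(4*d)) *
      ((if x = p.2 then 1 else 0) + (if x - unitV d p.1 = p.2 then 1 else 0)), ?_, ?_⟩
    · intro j x
      refine mul_nonneg (by positivity) (add_nonneg ?_ ?_) <;> split_ifs <;> norm_num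
    · intro x hx y hy
      rw [Fintype.sum_prod_type]
      have h1 : ∀ i : Fin d, ∑ z : nbh Λ, (√(1/(4*d)) *
        ((if x = z then 1 else 0) + (if x - unitV d i = z then 1 else 0))) * (√(1/(4*d)) *
        ((if y = z then 1 else 0) + (if y - unitV d i = z then 1 else 0))) =
          (1/(4*d)) * ((if x = y then 2 else 0) + ((if x + unitV d i = y then 1 else 0) +
            if x - unitV d i = y then 1 else 0)) := by
        intro i
        rw [Finset.sum_coe_sort (nbh Λ) (fun z => (√(1/(4*d)) *
        ((if x = z then (1:ℝ) else 0) + (if x - unitV d i = z then 1 else 0))) * (√(1/(4*d)) *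
        ((if y = z then 1 else 0) + (if y - unitV d i = z then 1 else 0))))]
        have hsq : √(1/(4*(d:ℝ))) * √(1/(4*(d:ℝ))) = 1/(4*d) := Real.mul_self_sqrt (by positivity)
        have h2 : ∀ a b : ℝ, (√(1/(4*(d:ℝ))) * a) * (√(1/(4*(d:ℝ))) * b) = (1/(4*d)) * (a * b) := by
          intro a b; rw [mul_mul_mul_comm, hsq]
        simp_rw [h2]
        rw [← Finset.mul_sum]
        congr 1
        simp only [add_mul, mul_add, Finset.sum_add_distrib, ite_mul, one_mul, zero_mul,
          Finset.sum_ite_eq, (mem_nbh hx).1, ((mem_nbh hx).2 i).2, if_true]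
        have e1 : (y = x) = (x = y) := propext eq_comm
        have e2 : (y - unitV d i = x) = (x + unitV d i = y) :=
          propext ⟨fun h => by rw [← h]; abel, fun h => by rw [← h]; abel⟩
        have e3 : (y = x - unitV d i) = (x - unitV d i = y) := propext eq_comm
        have e4 : (y - unitV d i = x - unitV d i) = (x = y) := by
          rw [sub_left_inj]; exact propext eq_comm
        simp only [e1, e2, e3, e4]
        split_ifs <;> norm_num
      rw [Finset.sum_congr rfl fun i _ => h1 i, ← Finset.mul_sum, Finset.sum_add_distrib]
      have hd' : (d : ℝ) ≠ 0 := by positivity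
      simp only [lazyP, Finset.sum_const, Finset.card_univ, Fintype.card_fin, nsmul_eq_mul]
      split_ifs <;> field_simp <;> ring
  | more k ih _ =>
    have := (ih (nbh Λ)).step
    simpa [← lazyP_succ2] using this

lemma Fac_trunc {d : ℕ} (hd : 0 < d) (L : ℕ) (Λ : Finset (V d)) : Fac Λ (covTrunc d L) :=
  (Fac.sum _ fun k => Fac_lazy hd k Λ).smul (by norm_num)

lemma Fac.psd {d : ℕ} {Λ : Finset (V d)} {C : V d → V d → ℝ} (h : Fac Λ C) (a : V d → ℝ) :
    0 ≤ ∑ x ∈ Λ, ∑ y ∈ Λ, a x * a y * C x y := by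
  obtain ⟨ι, _, v, hv, hC⟩ := h
  have : ∑ x ∈ Λ, ∑ y ∈ Λ, a x * a y * C x y = ∑ j, (∑ x ∈ Λ, a x * v j x) ^ 2 := by
    simp_rw [sq, Finset.sum_mul_sum]
    rw [Finset.sum_comm (s := Finset.univ)]
    refine Finset.sum_congr rfl fun x hx => ?_
    rw [Finset.sum_comm]
    refine Finset.sum_congr rfl fun y hy => ?_
    rw [hC x hx y hy, Finset.mul_sum]
    exact Finset.sum_congr rfl fun j _ => by ring
  rw [this]
  positivity

lemma psd_tail {d : ℕ} (hd : 3 ≤ d) (L : ℕ) (Λ : Finset (V d)) (a : V d → ℝ) :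
    0 ≤ ∑ x ∈ Λ, ∑ y ∈ Λ, a x * a y * covTail d L x y := by
  have hs : ∀ x y, HasSum (fun k => (1/2) * lazyP d (k + L + 1) x y) (covTail d L x y) := fun x y =>
    ((summable_nat_add_iff (f := fun k => lazyP d k x y) (L+1)).2
      (summable_lazyP hd x y)).hasSum.mul_left _
  have h := hasSum_sum (s := Λ) fun x _ => hasSum_sum (s := Λ) fun y _ =>
    (hs x y).mul_left (a x * a y)
  refine h.nonneg fun k => ?_
  exact ((Fac_lazy (by omega) _ Λ).smul (c := 1/2) (by norm_num)).psd a

end PartA2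

section PartB1

lemma cramer_wold {ι : Type*} [Fintype ι] {μ ν : Measure (ι → ℝ)} [IsFiniteMeasure μ]
    [IsFiniteMeasure ν]
    (h : ∀ a : ι → ℝ, μ.map (fun f => ∑ i, a i * f i) = ν.map (fun f => ∑ i, a i * f i)) :
    μ = ν := by
  classical
  refine Measure.ext_of_charFunDual (funext fun T => ?_)
  rw [charFunDual_eq_charFun_map_one, charFunDual_eq_charFun_map_one]
  have : (T : (ι → ℝ) → ℝ) = fun f => ∑ i, T (Pi.single i 1) * f i := by
    funext f
    conv_lhs => rw [← Finset.univ_sum_single f]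
    rw [map_sum]
    refine Finset.sum_congr rfl fun i _ => ?_
    have : (Pi.single i (f i) : ι → ℝ) = f i • Pi.single i 1 := by
      ext j; by_cases hj : j = i
      · subst hj; simp
      · simp [hj]
    rw [this, map_smul, smul_eq_mul, mul_comm]
  rw [this, h]

def Assoc {α : Type*} [MeasurableSpace α] [Preorder α] (μ : Measure α) : Prop :=
  ∀ f g : α → ENNReal, Measurable f → Measurable g → Monotone f → Monotone g →
    (∫⁻ x, f x ∂μ) * (∫⁻ x, g x ∂μ) ≤ ∫⁻ x, f x * g x ∂μ

lemma rearr {a b c e : ENNReal} (h1 : a ≤ b) (h2 : c ≤ e) : a * e + b * c ≤ a * c + b * e := by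
  obtain ⟨u, rfl⟩ := exists_add_of_le h1
  obtain ⟨w, rfl⟩ := exists_add_of_le h2
  have : a * c + (a + u) * (c + w) = a * (c + w) + (a + u) * c + u * w := by ring
  rw [this]
  exact le_self_add

lemma assoc_real (ν : Measure ℝ) [IsProbabilityMeasure ν] : Assoc ν := by
  intro f g hf hg mf mg
  have key : ∫⁻ x, ∫⁻ y, (f x * g y + f y * g x) ∂ν ∂ν ≤ ∫⁻ x, ∫⁻ y, (f x * g x + f y * g y) ∂ν ∂ν := by
    refine lintegral_mono fun x => lintegral_mono fun y => ?_
    rcases le_total x y with h | h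
    · exact rearr (mf h) (mg h)
    · have := rearr (mf h) (mg h)
      simpa [add_comm] using this
  have h1 : ∫⁻ x, ∫⁻ y, (f x * g y + f y * g x) ∂ν ∂ν = 2 * ((∫⁻ x, f x ∂ν) * (∫⁻ x, g x ∂ν)) := by
    have : ∀ x, ∫⁻ y, (f x * g y + f y * g x) ∂ν = f x * (∫⁻ y, g y ∂ν) + (∫⁻ y, f y ∂ν) * g x := by
      intro x
      rw [lintegral_add_left (by fun_prop), lintegral_const_mul _ hg, lintegral_mul_const _ hf]
    simp_rw [this]
    rw [lintegral_add_left (by fun_prop), lintegral_mul_const _ hf, lintegral_const_mul _ hg]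
    ring
  have h2 : ∫⁻ x, ∫⁻ y, (f x * g x + f y * g y) ∂ν ∂ν = 2 * (∫⁻ x, f x * g x ∂ν) := by
    have : ∀ x, ∫⁻ y, (f x * g x + f y * g y) ∂ν = f x * g x + ∫⁻ y, f y * g y ∂ν := by
      intro x
      rw [lintegral_add_left (by fun_prop)]; simp
    simp_rw [this]
    rw [lintegral_add_left (by fun_prop)]
    simp; ring
  rw [h1, h2] at key
  exact (ENNReal.mul_le_mul_iff_right (by norm_num) (by norm_num)).1 key

lemma Assoc.map {α β : Type*} [MeasurableSpace α] [Preorder α] [MeasurableSpace β] [Preorder β]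
    {μ : Measure α} (h : Assoc μ) {T : α → β} (hT : Measurable T) (mT : Monotone T) :
    Assoc (μ.map T) := by
  intro f g hf hg mf mg
  rw [lintegral_map hf hT, lintegral_map hg hT, lintegral_map (f := fun x => f x * g x) (by fun_prop) hT]
  exact h _ _ (hf.comp hT) (hg.comp hT) (mf.comp mT) (mg.comp mT)

lemma Assoc.conv {ι : Type*} [Fintype ι] {μ ν : Measure (ι → ℝ)} [IsProbabilityMeasure μ]
    [IsProbabilityMeasure ν] (h : Assoc μ) (h' : Assoc ν) : Assoc (μ.conv ν) := by
  intro f g hf hg mf mg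
  rw [Measure.lintegral_conv hf, Measure.lintegral_conv hg, Measure.lintegral_conv (f := fun x => f x * g x) (by fun_prop)]
  have mF : ∀ f : (ι → ℝ) → ENNReal, Measurable f → Measurable fun x => ∫⁻ y, f (x + y) ∂ν := by
    intro f hf
    exact Measurable.lintegral_prod_right' (f := fun p : (ι → ℝ) × (ι → ℝ) => f (p.1 + p.2)) (by fun_prop)
  refine (h _ _ (mF f hf) (mF g hg) (fun a b hab => lintegral_mono fun y => mf (by gcongr))
    (fun a b hab => lintegral_mono fun y => mg (by gcongr))).trans ?_
  refine lintegral_mono fun x => ?_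
  exact h' _ _ (by fun_prop) (by fun_prop) (fun a b hab => mf (by gcongr)) (fun a b hab => mg (by gcongr))

lemma exists_assoc {ι κ : Type*} [Fintype ι] (s : Finset κ) (v : κ → ι → ℝ) (hv : ∀ j i, 0 ≤ v j i) :
    ∃ μ : Measure (ι → ℝ), IsProbabilityMeasure μ ∧ Assoc μ ∧ ∀ a : ι → ℝ,
      μ.map (fun f => ∑ i, a i * f i) =
        gaussianReal 0 (Real.toNNReal (∑ j ∈ s, (∑ i, a i * v j i)^2)) := by
  classical
  induction s using Finset.induction_on with
  | empty =>
    refine ⟨Measure.dirac 0, inferInstance, ?_, ?_⟩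
    · intro f g hf hg _ _
      rw [lintegral_dirac' _ hf, lintegral_dirac' _ hg, lintegral_dirac' _ (by fun_prop)]
    · intro a
      rw [Measure.map_dirac' (by fun_prop)]
      simp
  | insert j s hj ih =>
    obtain ⟨μ, hμ, hA, hm⟩ := ih
    have hT : Measurable (fun t : ℝ => t • v j) := by fun_prop
    have hprob : IsProbabilityMeasure ((gaussianReal 0 1).map (fun t : ℝ => t • v j)) :=
      Measure.isProbabilityMeasure_map hT.aemeasurable
    refine ⟨μ.conv ((gaussianReal 0 1).map (fun t : ℝ => t • v j)), inferInstance,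
      hA.conv ((assoc_real _).map hT ?_), fun a => ?_⟩
    · intro t u htu i
      exact mul_le_mul_of_nonneg_right htu (hv j i)
    · have e := Measure.map_conv_continuousLinearMap (μ := μ)
        (ν := ((gaussianReal 0 1).map (fun t : ℝ => t • v j)))
        (∑ i, a i • (ContinuousLinearMap.proj i : (ι → ℝ) →L[ℝ] ℝ))
      have e2 : (⇑(∑ i, a i • (ContinuousLinearMap.proj i : (ι → ℝ) →L[ℝ] ℝ)) : (ι → ℝ) → ℝ) =
          fun f => ∑ i, a i * f i := by
        funext f; simp
      rw [e2] at e
      rw [e, hm, Measure.map_map (by fun_prop) hT]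
      have e3 : (fun f : ι → ℝ => ∑ i, a i * f i) ∘ (fun t : ℝ => t • v j) =
          fun t => t * (∑ i, a i * v j i) := by
        funext t; simp [Finset.mul_sum]
        exact Finset.sum_congr rfl fun i _ => by ring
      rw [e3, gaussianReal_map_mul_const, gaussianReal_conv_gaussianReal, Finset.sum_insert hj,
        add_comm (_ ^ 2), Real.toNNReal_add (by positivity) (by positivity)]
      congr 1
      · simp
      · congr 1
        ext
        simp
        positivity

end PartB1

section PartB2

variable {Ω : Type*} [MeasurableSpace Ω] {d : ℕ}

def restr (Λ : Finset (V d)) (X : V d → Ω → ℝ) (ω : Ω) : Λ → ℝ := fun x => X x ω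

def LS {Λ : Finset (V d)} (h : ℝ) (f : Λ → ℝ) : Set (V d) := {z | ∃ hz : z ∈ Λ, h ≤ f ⟨z, hz⟩}

lemma LS_restr (Λ : Finset (V d)) (X : V d → Ω → ℝ) (h : ℝ) (ω : Ω) :
    LS h (restr Λ X ω) = {z | h ≤ X z ω} ∩ (Λ : Set (V d)) := by
  ext z; simp [LS, restr, and_comm]

lemma meas_LS {Λ : Finset (V d)} (h : ℝ) (p : Set (V d) → Prop) :
    MeasurableSet {f : Λ → ℝ | p (LS h f)} := by
  have hm : Measurable (fun (f : Λ → ℝ) (z : Λ) => h ≤ f z) := by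
    refine measurable_pi_lambda _ fun z => ?_
    exact measurableSet_setOfPred.1 (measurableSet_le measurable_const (measurable_pi_apply z))
  have : {f : Λ → ℝ | p (LS h f)} = (fun (f : Λ → ℝ) (z : Λ) => h ≤ f z) ⁻¹'
      {q | p {z | ∃ hz : z ∈ Λ, q ⟨z, hz⟩}} := rfl
  rw [this]
  exact hm (Set.toFinite _).measurableSet

lemma measurable_restr {Λ : Finset (V d)} {X : V d → Ω → ℝ} (hX : ∀ x, Measurable (X x)) :
    Measurable (restr Λ X) := measurable_pi_lambda _ fun x => hX x

lemma meas_ev (Λ : Finset (V d)) {X : V d → Ω → ℝ} (hX : ∀ x, Measurable (X x)) (h : ℝ)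
    (p : Set (V d) → Prop) : MeasurableSet {ω | p ({z | h ≤ X z ω} ∩ (Λ : Set (V d)))} := by
  simp_rw [← LS_restr]
  exact (measurable_restr hX) (meas_LS h p)

lemma law_lin {P : Measure Ω} (Λ : Finset (V d)) {X : V d → Ω → ℝ} {C : V d → V d → ℝ}
    (hX : IsCGF P X C) (a : Λ → ℝ) :
    (P.map (restr Λ X)).map (fun f => ∑ i, a i * f i) =
      gaussianReal 0 (Real.toNNReal (∑ x : Λ, ∑ y : Λ, a x * a y * C x y)) := by
  classical
  rw [Measure.map_map (by fun_prop) (measurable_restr hX.1)]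
  have := hX.2 Λ (fun x => if h : x ∈ Λ then a ⟨x, h⟩ else 0)
  convert this using 2
  · funext ω
    rw [← Finset.sum_coe_sort Λ]
    simp [restr]
  · congr 1
    rw [← Finset.sum_coe_sort Λ]
    refine Finset.sum_congr rfl fun x _ => ?_
    rw [← Finset.sum_coe_sort Λ]
    simp

lemma law_eq {P : Measure Ω} [IsProbabilityMeasure P] (Λ : Finset (V d)) {X Y : V d → Ω → ℝ}
    {C : V d → V d → ℝ} (hX : IsCGF P X C) (hY : IsCGF P Y C) :
    P.map (restr Λ X) = P.map (restr Λ Y) := by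
  have := Measure.isFiniteMeasure_map P (restr Λ X)
  have := Measure.isFiniteMeasure_map P (restr Λ Y)
  exact cramer_wold fun a => by rw [law_lin Λ hX, law_lin Λ hY]

lemma ev_eq {P : Measure Ω} [IsProbabilityMeasure P] (Λ : Finset (V d)) {X Y : V d → Ω → ℝ}
    {C : V d → V d → ℝ} (hX : IsCGF P X C) (hY : IsCGF P Y C) (h : ℝ) (p : Set (V d) → Prop) :
    P {ω | p ({z | h ≤ X z ω} ∩ (Λ : Set (V d)))} = P {ω | p ({z | h ≤ Y z ω} ∩ (Λ : Set (V d)))} := by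
  have key := law_eq Λ hX hY
  have : P.map (restr Λ X) {f : Λ → ℝ | p (LS h f)} = P.map (restr Λ Y) {f : Λ → ℝ | p (LS h f)} := by
    rw [key]
  rw [Measure.map_apply (measurable_restr hX.1) (meas_LS h p),
    Measure.map_apply (measurable_restr hY.1) (meas_LS h p)] at this
  simpa only [preimage_ofPred_eq, LS_restr] using this

lemma IsCGF.comp {P : Measure Ω} {X : V d → Ω → ℝ} {C : V d → V d → ℝ} (hX : IsCGF P X C)
    (T : V d → V d) (hT : Function.Injective T) (hC : ∀ x y, C (T x) (T y) = C x y) :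
    IsCGF P (fun x => X (T x)) C := by
  classical
  refine ⟨fun x => hX.1 _, fun s a => ?_⟩
  have := hX.2 (s.image T) (fun x => a (Function.invFun T x))
  simp only [Finset.sum_image hT.injOn, Function.leftInverse_invFun hT _, hC] at this
  exact this

lemma fkg {P : Measure Ω} [IsProbabilityMeasure P] (Λ : Finset (V d)) {X : V d → Ω → ℝ}
    {C : V d → V d → ℝ} (hX : IsCGF P X C) (hF : Fac Λ C) (h : ℝ) (p q : Set (V d) → Prop)
    (hp : ∀ s t, s ⊆ t → p s → p t) (hq : ∀ s t, s ⊆ t → q s → q t) :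
    P {ω | p ({z | h ≤ X z ω} ∩ (Λ : Set (V d)))} * P {ω | q ({z | h ≤ X z ω} ∩ (Λ : Set (V d)))} ≤
      P {ω | p ({z | h ≤ X z ω} ∩ (Λ : Set (V d))) ∧ q ({z | h ≤ X z ω} ∩ (Λ : Set (V d)))} := by
  classical
  obtain ⟨ι, _, v, hv, hC⟩ := hF
  obtain ⟨μ, hμ, hA, hm⟩ := exists_assoc (Finset.univ : Finset ι) (fun j (x : Λ) => v j x)
    (fun j x => hv j x)
  have hf := Measure.isFiniteMeasure_map P (restr Λ X)
  have e : P.map (restr Λ X) = μ := by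
    refine cramer_wold fun a => ?_
    rw [law_lin Λ hX, hm]
    congr 2
    simp_rw [sq, Finset.sum_mul_sum]
    rw [Finset.sum_comm (s := (Finset.univ : Finset ι))]
    refine Finset.sum_congr rfl fun x hx => ?_
    rw [Finset.sum_comm]
    refine Finset.sum_congr rfl fun y hy => ?_
    rw [hC x x.2 y y.2, Finset.mul_sum]
    exact Finset.sum_congr rfl fun j _ => by ring
  have hmono : ∀ p : Set (V d) → Prop, (∀ s t, s ⊆ t → p s → p t) →
      Monotone (indicator {f : Λ → ℝ | p (LS h f)} (1 : (Λ → ℝ) → ENNReal)) := by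
    intro p hp f g hfg
    by_cases h1 : p (LS h f)
    · have h2 : p (LS h g) := by
        refine hp _ _ ?_ h1
        rintro z ⟨hz, hz'⟩
        exact ⟨hz, hz'.trans (hfg _)⟩
      simp [indicator, h1, h2]
    · simp [indicator, h1]
  have := hA _ _ (measurable_one.indicator (meas_LS h p)) (measurable_one.indicator (meas_LS h q))
    (hmono p hp) (hmono q hq)
  simp_rw [← inter_indicator_mul, Pi.one_apply, mul_one] at this
  rw [lintegral_indicator_one (meas_LS h p), lintegral_indicator_one (meas_LS h q)] at this
  have e3 := lintegral_indicator_one (μ := μ) ((meas_LS (Λ := Λ) h p).inter (meas_LS h q))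
  simp only [Pi.one_def] at e3
  rw [e3, ← e, Measure.map_apply (measurable_restr hX.1) (meas_LS h p),
    Measure.map_apply (measurable_restr hX.1) (meas_LS h q),
    Measure.map_apply (measurable_restr hX.1) ((meas_LS (Λ := Λ) h p).inter (meas_LS h q))] at this
  simp only [preimage_inter, preimage_ofPred_eq, LS_restr] at this
  exact this

end PartB2

section PartC1

variable {Ω : Type*} [MeasurableSpace Ω] {d : ℕ}

lemma adj_symm {x y : V d} (h : adj x y) : adj y x := by
  unfold adj at *
  rw [← h]
  exact Finset.sum_congr rfl fun i _ => by omega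

lemma connIn_iff {S : Set (V d)} {x y : V d} :
    ConnIn S {x} {y} ↔ x ∈ S ∧ Relation.ReflTransGen (fun a b => adj a b ∧ b ∈ S) x y := by
  constructor
  · rintro ⟨n, γ, h0, hn, hS, ha⟩
    simp only [mem_singleton_iff] at h0 hn
    refine ⟨h0 ▸ hS 0 (Nat.zero_le _), ?_⟩
    have : ∀ k ≤ n, Relation.ReflTransGen (fun a b => adj a b ∧ b ∈ S) x (γ k) := by
      intro k hk
      induction k with
      | zero => rw [h0]
      | succ k ih => exact (ih (by omega)).tail ⟨ha k (by omega), hS _ hk⟩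
    exact hn ▸ this n le_rfl
  · rintro ⟨hx, h⟩
    induction h with
    | refl => exact ⟨0, fun _ => x, rfl, rfl, fun _ _ => hx, fun k hk => absurd hk (by omega)⟩
    | @tail b c _ hbc ih =>
      obtain ⟨n, γ, h0, hn, hS, ha⟩ := ih
      simp only [mem_singleton_iff] at h0 hn
      refine ⟨n + 1, fun k => if k ≤ n then γ k else c, by simp [h0], by simp, ?_, ?_⟩
      · intro k hk
        by_cases h : k ≤ n
        · simpa [h] using hS k h
        · simpa [h] using hbc.2
      · intro k hk
        by_cases h : k + 1 ≤ n
        · have h' : k ≤ n := by omega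
          simpa [h, h'] using ha k (by omega)
        · have h' : k = n := by omega
          subst h'
          simpa [hn] using hbc.1

lemma connIn_exists {S A B : Set (V d)} : ConnIn S A B ↔ ∃ x ∈ A, ∃ y ∈ B, ConnIn S {x} {y} := by
  constructor
  · rintro ⟨n, γ, h0, hn, hS, ha⟩
    exact ⟨_, h0, _, hn, n, γ, rfl, rfl, hS, ha⟩
  · rintro ⟨x, hx, y, hy, n, γ, h0, hn, hS, ha⟩
    simp only [mem_singleton_iff] at h0 hn
    exact ⟨n, γ, h0 ▸ hx, hn ▸ hy, hS, ha⟩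

lemma ConnIn.mono {S S' A B : Set (V d)} (h : ConnIn S A B) (hs : S ⊆ S') : ConnIn S' A B := by
  obtain ⟨n, γ, h0, hn, hS, ha⟩ := h
  exact ⟨n, γ, h0, hn, fun k hk => hs (hS k hk), ha⟩

lemma ConnIn.trans {S : Set (V d)} {x y z : V d} (h : ConnIn S {x} {y}) (h' : ConnIn S {y} {z}) :
    ConnIn S {x} {z} := by
  rw [connIn_iff] at *
  exact ⟨h.1, h.2.trans h'.2⟩

lemma ConnIn.mem_left {S : Set (V d)} {x y : V d} (h : ConnIn S {x} {y}) : x ∈ S :=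
  (connIn_iff.1 h).1

lemma ConnIn.mem_right {S : Set (V d)} {x y : V d} (h : ConnIn S {x} {y}) : y ∈ S := by
  obtain ⟨n, γ, h0, hn, hS, ha⟩ := h
  simp only [mem_singleton_iff] at hn
  exact hn ▸ hS n le_rfl

lemma connIn_refl {S : Set (V d)} {x : V d} (h : x ∈ S) : ConnIn S {x} {x} :=
  connIn_iff.2 ⟨h, .refl⟩

lemma connIn_adj {S : Set (V d)} {x y : V d} (hx : x ∈ S) (hy : y ∈ S) (h : adj x y) :
    ConnIn S {x} {y} :=
  connIn_iff.2 ⟨hx, .single ⟨h, hy⟩⟩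

lemma ConnIn.symm {S : Set (V d)} {x y : V d} (h : ConnIn S {x} {y}) : ConnIn S {y} {x} := by
  have hx := h.mem_left
  rw [connIn_iff] at h
  obtain ⟨_, h⟩ := h
  induction h with
  | refl => exact connIn_refl hx
  | @tail b c hb hbc ih =>
    have hb' : b ∈ S := (connIn_iff.2 ⟨hx, hb⟩ : ConnIn S {x} {b}).mem_right
    exact (connIn_adj hbc.2 hb' (adj_symm hbc.1)).trans ih

lemma ConnIn.map {S S' : Set (V d)} {x y : V d} (h : ConnIn S {x} {y}) (T : V d → V d)
    (hT : ∀ a b, adj a b → adj (T a) (T b)) (hS : ∀ a ∈ S, T a ∈ S') :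
    ConnIn S' {T x} {T y} := by
  obtain ⟨n, γ, h0, hn, hS', ha⟩ := h
  simp only [mem_singleton_iff] at h0 hn
  exact ⟨n, fun k => T (γ k), by simp [h0], by simp [hn], fun k hk => hS _ (hS' k hk),
    fun k hk => hT _ _ (ha k hk)⟩

lemma adj_unit (x : V d) (i : Fin d) : adj x (x + unitV d i) ∧ adj x (x - unitV d i) := by
  unfold adj
  constructor
  all_goals
    rw [Finset.sum_eq_single i]
    · simp [unitV]
    · intro j _ hj; simp [unitV, hj]
    · simp

def Ev (X : V d → Ω → ℝ) (h : ℝ) (S : Set (V d)) (x y : V d) : Set Ω :=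
  {ω | ConnIn ({z | h ≤ X z ω} ∩ S) {x} {y}}

lemma Ev_mono (X : V d → Ω → ℝ) (h : ℝ) {S S' : Set (V d)} (hS : S ⊆ S') (x y : V d) :
    Ev X h S x y ⊆ Ev X h S' x y := fun _ hω => ConnIn.mono hω (inter_subset_inter_right _ hS)

lemma Ev_trans {P : Measure Ω} [IsProbabilityMeasure P] {X : V d → Ω → ℝ} {C : V d → V d → ℝ}
    (hX : IsCGF P X C) (hF : ∀ Λ, Fac Λ C) (h : ℝ) {S S1 S2 : Set (V d)} (hS : S.Finite)
    (h1 : S1 ⊆ S) (h2 : S2 ⊆ S) (x y z : V d) :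
    P (Ev X h S1 x y) * P (Ev X h S2 y z) ≤ P (Ev X h S x z) := by
  have e := hS.coe_toFinset
  have key := fkg hS.toFinset hX (hF _) h (fun s => ConnIn (s ∩ S1) {x} {y})
    (fun s => ConnIn (s ∩ S2) {y} {z}) (fun s t hst hs => hs.mono (inter_subset_inter_left _ hst))
    (fun s t hst hs => hs.mono (inter_subset_inter_left _ hst))
  rw [e] at key
  have e1 : ∀ s : Set (V d), s ∩ S ∩ S1 = s ∩ S1 := fun s => by
    rw [inter_assoc, inter_eq_right.2 h1]
  have e2 : ∀ s : Set (V d), s ∩ S ∩ S2 = s ∩ S2 := fun s => by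
    rw [inter_assoc, inter_eq_right.2 h2]
  simp only [e1, e2] at key
  refine key.trans (measure_mono fun ω hω => ?_)
  exact (hω.1.mono (inter_subset_inter_right _ h1)).trans (hω.2.mono (inter_subset_inter_right _ h2))

lemma Ev_iso {P : Measure Ω} [IsProbabilityMeasure P] {X : V d → Ω → ℝ} {C : V d → V d → ℝ}
    (hX : IsCGF P X C) (h : ℝ) {S S' : Set (V d)} (hS : S.Finite) (T : V d → V d)
    (hT : Function.Injective T) (hC : ∀ x y, C (T x) (T y) = C x y)
    (hadj : ∀ a b, adj a b → adj (T a) (T b)) (hS' : ∀ a ∈ S, T a ∈ S') (x y : V d) :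
    P (Ev X h S x y) ≤ P (Ev X h S' (T x) (T y)) := by
  have key := ev_eq hS.toFinset hX (hX.comp T hT hC) h (fun s => ConnIn s {x} {y})
  rw [hS.coe_toFinset] at key
  unfold Ev
  rw [key]
  refine measure_mono fun ω hω => ?_
  exact ConnIn.map hω T hadj fun a ha => ⟨ha.1, hS' a ha.2⟩

lemma covTrunc_iso (L : ℕ) (τ : Equiv.Perm (Fin d)) (s : Fin d → ℤ) (hs : ∀ i, s i = 1 ∨ s i = -1)
    (a x y : V d) : covTrunc d L (isoT τ s a x) (isoT τ s a y) = covTrunc d L x y := by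
  unfold covTrunc
  simp only [lazyP_iso τ s hs a]

lemma Ev_isoT {P : Measure Ω} [IsProbabilityMeasure P] {X : V d → Ω → ℝ} {L : ℕ}
    (hX : IsCGF P X (covTrunc d L)) (h : ℝ) {S S' : Set (V d)} (hS : S.Finite)
    (τ : Equiv.Perm (Fin d)) (s : Fin d → ℤ) (hs : ∀ i, s i = 1 ∨ s i = -1) (a : V d)
    (hS' : ∀ z ∈ S, isoT τ s a z ∈ S') (x y : V d) :
    P (Ev X h S x y) ≤ P (Ev X h S' (isoT τ s a x) (isoT τ s a y)) :=
  Ev_iso hX h hS _ (isoT_inj τ s hs a) (covTrunc_iso L τ s hs a) (adj_iso τ s hs a) hS' x y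

lemma Ev_symm (X : V d → Ω → ℝ) (h : ℝ) (S : Set (V d)) (x y : V d) :
    Ev X h S x y = Ev X h S y x := by
  ext ω; exact ⟨ConnIn.symm, ConnIn.symm⟩

lemma Ev_single_le (X : V d → Ω → ℝ) (h : ℝ) (S : Set (V d)) (x y : V d) :
    Ev X h S x y ⊆ Ev X h {x} x x := by
  intro ω hω
  have := ConnIn.mem_left hω
  exact connIn_refl ⟨this.1, rfl⟩

lemma boxI_finite (x : V d) (r : ℕ) : (boxI x r).Finite := by
  refine (Set.finite_Icc (fun i => x i - r) (fun i => x i + r)).subset fun y hy => ?_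
  constructor <;> intro i <;> have := hy i <;> simp only <;> omega

end PartC1

section PartC2

variable {Ω : Type*} [MeasurableSpace Ω] {d : ℕ}

lemma link {P : Measure Ω} [IsProbabilityMeasure P] {X : V d → Ω → ℝ} {L : ℕ}
    (hX : IsCGF P X (covTrunc d L)) (hd : 0 < d) (h : ℝ) {R : ℕ} {z w : V d} {j : Fin d}
    (hw : (w j - z j).natAbs = R) {β : ENNReal} (hβ : β ≤ P (Ev X h (boxI z R) z w))
    (p : V d) (i : Fin d) (s : ℤ) (hs : s = 1 ∨ s = -1) :
    β * β ≤ P (Ev X h (boxI p R ∪ boxI (p + fun k => if k = i then 2 * s * R else 0) R) p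
      (p + fun k => if k = i then 2 * s * R else 0)) := by
  classical
  obtain ⟨u, hu, hu'⟩ : ∃ u : ℤ, (u = 1 ∨ u = -1) ∧ u * (w j - z j) = s * R := by
    rcases hs with rfl | rfl <;> rcases Int.natAbs_eq (w j - z j) with h1 | h1 <;> rw [hw] at h1
    · exact ⟨1, .inl rfl, by rw [h1]⟩
    · exact ⟨-1, .inr rfl, by rw [h1]; ring⟩
    · exact ⟨-1, .inr rfl, by rw [h1]⟩
    · exact ⟨1, .inl rfl, by rw [h1]; ring⟩
  set p' : V d := p + fun k => if k = i then 2 * s * R else 0 with hp'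
  let τ : Equiv.Perm (Fin d) := Equiv.swap i j
  have key : ∀ (v : ℤ) (hv : v = 1 ∨ v = -1) (c : V d), ∃ w' : V d,
      (∀ k, k ≠ i → w' k = c k + (w (τ k) - z (τ k))) ∧ w' i = c i + v * (w j - z j) ∧
      β ≤ P (Ev X h (boxI c R) c w') := by
    intro v hv c
    let σ : Fin d → ℤ := fun k => if k = i then v else 1
    have hσ : ∀ k, σ k = 1 ∨ σ k = -1 := by
      intro k; by_cases hk : k = i <;> simp [σ, hk, hv]
    let a : V d := fun k => c k - σ k * z (τ k)
    have hz : isoT τ σ a z = c := by ext k; simp [isoT, a]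
    refine ⟨isoT τ σ a w, ?_, ?_, ?_⟩
    · intro k hk; simp [isoT, a, σ, hk]; ring
    · simp [isoT, a, σ, τ]; ring
    · have := Ev_isoT hX h (boxI_finite z R) τ σ hσ a (S' := boxI c R) ?_ z w
      · rw [hz] at this
        exact hβ.trans this
      · intro y hy k
        have h1 := hy (τ k)
        have : isoT τ σ a y k - c k = σ k * (y (τ k) - z (τ k)) := by simp [isoT, a]; ring
        rw [this, Int.natAbs_mul]
        rcases hσ k with h2 | h2 <;> rw [h2] <;> simpa using h1
  obtain ⟨w1, ha1, hb1, hc1⟩ := key u hu p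
  obtain ⟨w2, ha2, hb2, hc2⟩ := key (-u) (by omega) p'
  have hww : w1 = w2 := by
    ext k
    by_cases hk : k = i
    · subst hk
      rw [hb1, hb2, neg_mul, hu', hp']; simp; ring
    · rw [ha1 k hk, ha2 k hk, hp']; simp [hk]
  rw [← hww, Ev_symm] at hc2
  refine (mul_le_mul' hc1 hc2).trans ?_
  exact Ev_trans hX (Fac_trunc hd L) h ((boxI_finite _ _).union (boxI_finite _ _))
    subset_union_left subset_union_right _ _ _

lemma boxI_sub {L : ℕ} {p : V d} (hp : p ∈ boxI (0 : V d) L) {R : ℕ} (hR : R ≤ L) :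
    boxI p R ⊆ boxI (0 : V d) (2 * L) := by
  intro y hy k
  have h1 := hp k
  have h2 := hy k
  simp only [Pi.zero_apply] at *
  omega

lemma chain {P : Measure Ω} [IsProbabilityMeasure P] {X : V d → Ω → ℝ} {L : ℕ} (hL : 1 ≤ L)
    (hX : IsCGF P X (covTrunc d L)) (hd : 0 < d) (h : ℝ) {β : ENNReal}
    (hβ : ∀ R : ℕ, 1 ≤ R → R ≤ L → ∃ z w : V d, (∃ j, (w j - z j).natAbs = R) ∧
      β ≤ P (Ev X h (boxI z R) z w))
    (x : V d) (hx : x ∈ boxI (0 : V d) L) (y : V d) (hy : y ∈ boxI (0 : V d) L) :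
    β ^ (4 * d + 1) ≤ P (Ev X h (boxI (0 : V d) (2 * L)) x y) := by
  classical
  have hsingle : ∀ p : V d, β ≤ P (Ev X h {p} p p) := by
    intro p
    obtain ⟨z, w, -, hzw⟩ := hβ 1 le_rfl hL
    refine hzw.trans ((measure_mono (Ev_single_le X h _ z w)).trans ?_)
    have hz : isoT (Equiv.refl _) (fun _ => 1) (p - z) z = p := by ext k; simp [isoT]
    have := Ev_isoT hX h (finite_singleton z) (Equiv.refl _) (fun _ => 1) (fun _ => .inl rfl)
      (p - z) (S' := {p}) (by rintro _ rfl; rw [hz]; rfl) z z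
    rwa [hz] at this
  have hβ1 : β ≤ 1 := (hsingle 0).trans prob_le_one
  have hfin := boxI_finite (0 : V d) (2 * L)
  have hFac := Fac_trunc hd L
  have stepA : ∀ (R : ℕ) (p : V d) (i : Fin d) (s : ℤ), (s = 1 ∨ s = -1) → R ≤ L →
      p ∈ boxI (0 : V d) L → (p + fun k => if k = i then 2 * s * R else 0) ∈ boxI (0 : V d) L →
      β ^ 2 ≤ P (Ev X h (boxI (0 : V d) (2 * L)) p (p + fun k => if k = i then 2 * s * R else 0)) := by
    intro R p i s hs hR hp hp'
    rcases Nat.eq_zero_or_pos R with rfl | hR0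
    · have : (p + fun k => if k = i then 2 * s * ((0 : ℕ) : ℤ) else 0) = p := by ext; simp
      rw [this]
      refine (pow_le_of_le_one zero_le hβ1 two_ne_zero).trans ((hsingle p).trans (measure_mono ?_))
      exact Ev_mono X h (singleton_subset_iff.2 (boxI_sub hp (Nat.zero_le _)
        (by intro k; simp))) _ _
    · obtain ⟨z, w, ⟨j, hj⟩, hzw⟩ := hβ R hR0 hR
      rw [sq]
      refine (link hX hd h hj hzw p i s hs).trans (measure_mono (Ev_mono X h ?_ _ _))
      exact union_subset (boxI_sub hp hR) (boxI_sub hp' hR)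
  have stepB : ∀ p ∈ boxI (0 : V d) L, ∀ q ∈ boxI (0 : V d) L, adj p q ∨ p = q →
      β ^ 2 ≤ P (Ev X h (boxI (0 : V d) (2 * L)) p q) := by
    intro p hp q hq hpq
    rw [sq]
    refine (mul_le_mul' (hsingle p) (hsingle q)).trans ?_
    have key := fkg hfin.toFinset hX (hFac _) h (fun s => ConnIn (s ∩ {p}) {p} {p})
      (fun s => ConnIn (s ∩ {q}) {q} {q}) (fun s t hst hs => hs.mono (inter_subset_inter_left _ hst))
      (fun s t hst hs => hs.mono (inter_subset_inter_left _ hst))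
    have hp2 : p ∈ boxI (0 : V d) (2 * L) := boxI_sub hp (Nat.zero_le _) (by intro k; simp)
    have hq2 : q ∈ boxI (0 : V d) (2 * L) := boxI_sub hq (Nat.zero_le _) (by intro k; simp)
    rw [hfin.coe_toFinset] at key
    have e1 : ∀ s : Set (V d), ∀ p ∈ boxI (0 : V d) (2 * L),
        s ∩ boxI (0 : V d) (2 * L) ∩ {p} = s ∩ {p} := fun s p hp => by
      rw [inter_assoc, inter_eq_right.2 (singleton_subset_iff.2 hp)]
    simp only [e1 _ p hp2, e1 _ q hq2] at key
    refine key.trans (measure_mono fun ω hω => ?_)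
    have hpm := hω.1.mem_left.1
    have hqm := hω.2.mem_left.1
    rcases hpq with hpq | rfl
    · exact connIn_adj ⟨hpm, hp2⟩ ⟨hqm, hq2⟩ hpq
    · exact connIn_refl ⟨hpm, hp2⟩
  have step : ∀ p ∈ boxI (0 : V d) L, ∀ (i : Fin d) (t : ℤ), t.natAbs ≤ L →
      β ^ 4 ≤ P (Ev X h (boxI (0 : V d) (2 * L)) p (Function.update p i t)) := by
    intro p hp i t ht
    have hpi := hp i
    simp only [Pi.zero_apply, sub_zero] at hpi
    obtain ⟨s, R, r, hs, hr, ht'⟩ : ∃ (s : ℤ) (R : ℕ) (r : ℕ), (s = 1 ∨ s = -1) ∧ r ≤ 1 ∧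
        t = p i + s * (2 * R + r) := by
      rcases le_total (p i) t with h1 | h1
      · exact ⟨1, ((t - p i) / 2).toNat, ((t - p i) % 2).toNat, .inl rfl, by omega, by omega⟩
      · exact ⟨-1, ((p i - t) / 2).toNat, ((p i - t) % 2).toNat, .inr rfl, by omega, by omega⟩
    have hm : (p + fun k => if k = i then 2 * s * R else 0) ∈ boxI (0 : V d) L := by
      intro k
      have := hp k
      by_cases hk : k = i
      · subst hk
        simp only [Pi.add_apply, if_true, Pi.zero_apply]
        rcases hs with rfl | rfl <;> omega
      · simpa [hk] using this
    have hq : Function.update p i t ∈ boxI (0 : V d) L := by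
      intro k
      by_cases hk : k = i
      · subst hk; simpa using ht
      · simpa [hk] using hp k
    have hR : R ≤ L := by rcases hs with rfl | rfl <;> omega
    rw [show (4 : ℕ) = 2 + 2 from rfl, pow_add]
    refine (mul_le_mul' (stepA R p i s hs hR hp hm) (stepB _ hm _ hq ?_)).trans
      (Ev_trans hX hFac h hfin Subset.rfl Subset.rfl _ _ _)
    have : r = 0 ∨ r = 1 := by omega
    rcases this with rfl | rfl
    · right
      ext k
      by_cases hk : k = i
      · subst hk; simp [ht']; ring
      · simp [hk]
    · left
      unfold adj
      rw [Finset.sum_eq_single i]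
      · simp only [Pi.add_apply, if_true, Function.update_self, ht']
        rcases hs with rfl | rfl <;> omega
      · intro j _ hj; simp [hj]
      · simp
  have main : ∀ F : Finset (Fin d), β ^ (4 * F.card + 1) ≤
      P (Ev X h (boxI (0 : V d) (2 * L)) x (fun i => if i ∈ F then y i else x i)) := by
    intro F
    induction F using Finset.induction_on with
    | empty =>
      simp only [Finset.card_empty, mul_zero, zero_add, pow_one, Finset.notMem_empty, if_false]
      refine (hsingle x).trans (measure_mono ?_)
      exact Ev_mono X h (singleton_subset_iff.2 (boxI_sub hx (Nat.zero_le _)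
        (by intro k; simp))) _ _
    | insert i F hi ih =>
      have hm : (fun i => if i ∈ F then y i else x i) ∈ boxI (0 : V d) L := by
        intro k
        by_cases hk : k ∈ F
        · simpa [hk] using hy k
        · simpa [hk] using hx k
      have h2 := step _ hm i (y i) (by simpa using hy i)
      have e : Function.update (fun i => if i ∈ F then y i else x i) i (y i) =
          fun k => if k ∈ insert i F then y k else x k := by
        ext k
        by_cases hk : k = i
        · subst hk; simp
        · simp [hk]
      rw [e] at h2
      rw [Finset.card_insert_of_notMem hi, show 4 * (F.card + 1) + 1 = (4 * F.card + 1) + 4 by ring,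
        pow_add]
      exact (mul_le_mul' ih h2).trans (Ev_trans hX hFac h hfin Subset.rfl Subset.rfl _ _ _)
  simpa using main Finset.univ

end PartC2

section PartC3

variable {Ω : Type*} [MeasurableSpace Ω] {d : ℕ}

lemma adj_coord {x y : V d} (h : adj x y) (i : Fin d) : (x i - y i).natAbs ≤ 1 := by
  unfold adj at h
  rw [← h]
  exact Finset.single_le_sum (f := fun i => (x i - y i).natAbs) (fun _ _ => Nat.zero_le _)
    (Finset.mem_univ i)

lemma mem_box_iff {n : ℕ} {r : ℝ} (hr : r = n) (x : V d) : x ∈ box d r ↔ x ∈ boxI (0 : V d) n := by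
  subst hr
  refine forall_congr' fun i => ?_
  simp only [Pi.zero_apply, Int.cast_zero, sub_zero]
  rw [← Int.cast_abs, ← Int.cast_natCast (R := ℝ), Int.cast_le, Int.abs_eq_natAbs]
  omega

lemma bdry_coord {n : ℕ} {r : ℝ} (hr : r = n) {x : V d} (h : x ∈ bdry d r) :
    ∃ i, n ≤ (x i).natAbs := by
  obtain ⟨_, z, hz, hxz⟩ := h
  have hz' : z ∉ boxI (0 : V d) n := fun h => hz ((mem_box_iff hr z).2 h)
  simp only [boxI, mem_ofPred_eq, not_forall] at hz'
  obtain ⟨i, hi⟩ := hz'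
  have := adj_coord hxz i
  simp only [Pi.zero_apply] at hi
  exact ⟨i, by omega⟩

lemma mem_bdry {n : ℕ} {r : ℝ} (hr : r = n) {x : V d} (h : x ∈ boxI (0 : V d) n) {i : Fin d}
    (hi : (x i).natAbs = n) : x ∈ bdry d r := by
  refine ⟨(mem_box_iff hr x).2 h, ?_⟩
  rcases le_total 0 (x i) with h0 | h0
  · refine ⟨x + unitV d i, fun hh => ?_, (adj_unit x i).1⟩
    have := (mem_box_iff hr _).1 hh i
    simp [unitV] at this
    omega
  · refine ⟨x - unitV d i, fun hh => ?_, (adj_unit x i).2⟩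
    have := (mem_box_iff hr _).1 hh i
    simp [unitV] at this
    omega

lemma crossing {S : Set (V d)} {R r : ℕ} (hr : r = R + 1)
    (h : ConnIn S (box d ((R : ℝ) + 1)) (bdry d (2 * ((R : ℝ) + 1)))) :
    ∃ z ∈ boxI (0 : V d) r, ∃ w, (∃ j, (w j - z j).natAbs = r) ∧ ConnIn (S ∩ boxI z r) {z} {w} := by
  classical
  obtain ⟨n, γ, h0, hn, hS, ha⟩ := h
  have h0' := (mem_box_iff (n := r) (by rw [hr]; push_cast; ring) _).1 h0
  obtain ⟨i, hi⟩ := bdry_coord (n := 2 * r) (by rw [hr]; push_cast; ring) hn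
  have hex : ∃ k, k ≤ n ∧ ∃ j, r ≤ (γ k j - γ 0 j).natAbs := by
    refine ⟨n, le_rfl, i, ?_⟩
    have := h0' i
    simp only [Pi.zero_apply] at this
    omega
  obtain ⟨hk, j, hj⟩ := Nat.find_spec hex
  set k := Nat.find hex with hkdef
  have hlt : ∀ m < k, ∀ j, (γ m j - γ 0 j).natAbs < r := by
    intro m hm j
    by_contra hc
    exact Nat.find_min hex hm ⟨by omega, j, by omega⟩
  have hk0 : k ≠ 0 := by
    intro hk0
    rw [hk0] at hj
    simp at hj; omega
  obtain ⟨m, hm⟩ := Nat.exists_eq_succ_of_ne_zero hk0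
  have hle : ∀ j, (γ k j - γ 0 j).natAbs ≤ r := by
    intro j
    have h1 := hlt m (by omega) j
    have h2 := adj_coord (ha m (by omega)) j
    rw [hm]
    simp only [Nat.succ_eq_add_one]
    omega
  refine ⟨γ 0, h0', γ k, ⟨j, le_antisymm (hle j) hj⟩, k, γ, rfl, rfl, fun m hmk => ⟨hS m (by omega), ?_⟩,
    fun m hmk => ha m (by omega)⟩
  intro j
  rcases hmk.lt_or_eq with h1 | h1
  · exact (hlt m h1 j).le
  · rw [h1]; exact hle j

lemma boxI_card (L : ℕ) : ∃ B : Finset (V d), (B : Set (V d)) = boxI (0 : V d) L ∧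
    B.card = (2 * L + 1) ^ d := by
  refine ⟨Finset.Icc (fun _ => -(L : ℤ)) (fun _ => (L : ℤ)), ?_, ?_⟩
  · ext y
    simp only [Finset.coe_Icc, mem_Icc, boxI, mem_ofPred_eq, Pi.le_def, Pi.zero_apply, ← forall_and]
    exact forall_congr' fun i => by omega
  · rw [Pi.card_Icc]
    simp
    congr 1
    omega

lemma union_bound {P : Measure Ω} {ι : Type*} (s : Finset ι) (A : ι → Set Ω) {c M : ENNReal}
    (hc : c ≠ 0) (hM : (s.card : ENNReal) ≤ M) (hM' : M ≠ ⊤) (h : c ≤ P (⋃ e ∈ s, A e)) :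
    ∃ e ∈ s, c / M ≤ P (A e) := by
  by_contra! hcon
  have h1 : c ≤ ∑ e ∈ s, P (A e) := h.trans (measure_biUnion_finset_le _ _)
  have hs : s.Nonempty := by
    rw [Finset.nonempty_iff_ne_empty]
    rintro rfl
    simp at h1
    exact hc h1
  have h2 := ENNReal.sum_lt_sum_of_nonempty hs hcon
  rw [Finset.sum_const, nsmul_eq_mul] at h2
  have h3 : (s.card : ENNReal) * (c / M) ≤ c :=
    (mul_le_mul' hM le_rfl).trans ENNReal.mul_div_le
  exact absurd (h1.trans_lt h2) (not_lt.2 h3)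

lemma gauss_tail {P : Measure Ω} [IsProbabilityMeasure P] {X : V d → Ω → ℝ} {C : V d → V d → ℝ}
    (hX : IsCGF P X C) (x : V d) {δ t v : ℝ} (ht : 0 ≤ t) (hv : C x x ≤ v) (hv0 : 0 ≤ v) :
    P {ω | δ ≤ X x ω} ≤ ENNReal.ofReal (Real.exp (-t * δ + v * t ^ 2 / 2)) := by
  have h1 := hX.2 {x} 1
  simp only [Finset.sum_singleton, Pi.one_apply, one_mul] at h1
  have h1' : P.map (X x) = gaussianReal 0 (C x x).toNNReal := h1
  have h2 := measure_ge_le_exp_mul_mgf (μ := P) (X := X x) δ ht ?_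
  · rw [mgf_gaussianReal h1'] at h2
    rw [← ENNReal.ofReal_toReal (measure_ne_top P _)]
    apply ENNReal.ofReal_le_ofReal
    refine h2.trans ?_
    rw [← Real.exp_add]
    apply Real.exp_le_exp.2
    have : ((C x x).toNNReal : ℝ) ≤ v := by
      rw [Real.coe_toNNReal']; exact max_le hv hv0
    have := mul_le_mul_of_nonneg_right this (sq_nonneg t)
    linarith
  · have := integrable_exp_mul_gaussianReal (μ := 0) (v := (C x x).toNNReal) t
    rw [← h1'] at this
    exact this.comp_measurable (hX.1 x)

/-- the tail field is uniformly small -/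
lemma tail_small (hd : 3 ≤ d) {δ ε : ℝ} (hδ : 0 < δ) (hε : 0 < ε) : ∃ L0 : ℕ, 1 ≤ L0 ∧
    ∀ {Ω : Type*} [MeasurableSpace Ω] (P : Measure Ω) [IsProbabilityMeasure P]
      (ξ : V d → Ω → ℝ) (L : ℕ), L0 ≤ L → IsCGF P ξ (covTail d L) →
      P {ω | ∃ z ∈ boxI (0 : V d) (2 * L), δ ≤ ξ z ω} ≤ ENNReal.ofReal ε := by
  obtain ⟨K, hK, hcov⟩ := covTail_le hd
  have hlim : Tendsto (fun L : ℕ => (5 : ℝ) ^ d * Real.exp (K / 2) * (((L : ℝ) ^ (1/8 : ℝ)) ^ ((8 * d : ℕ) : ℝ) *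
      Real.exp (-δ * (L : ℝ) ^ (1/8 : ℝ)))) atTop (nhds 0) := by
    have h1 := tendsto_rpow_mul_exp_neg_mul_atTop_nhds_zero ((8 * d : ℕ) : ℝ) δ hδ
    have h2 : Tendsto (fun L : ℕ => (L : ℝ) ^ (1/8 : ℝ)) atTop atTop :=
      (tendsto_rpow_atTop (by norm_num)).comp tendsto_natCast_atTop_atTop
    simpa using (h1.comp h2).const_mul ((5 : ℝ) ^ d * Real.exp (K / 2))
  obtain ⟨L1, hL1⟩ := eventually_atTop.1 (hlim.eventually (gt_mem_nhds hε))
  refine ⟨max L1 1, le_max_right _ _, ?_⟩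
  intro Ω _ P _ ξ L hL hξ
  have hL1' : L1 ≤ L := (le_max_left _ _).trans hL
  have hLpos : 1 ≤ L := (le_max_right _ _).trans hL
  have hLr : (1 : ℝ) ≤ L := by exact_mod_cast hLpos
  obtain ⟨B, hB, hBc⟩ := boxI_card (d := d) (2 * L)
  have hsub : {ω | ∃ z ∈ boxI (0 : V d) (2 * L), δ ≤ ξ z ω} ⊆ ⋃ z ∈ B, {ω | δ ≤ ξ z ω} := by
    rintro ω ⟨z, hz, hzδ⟩
    rw [← hB] at hz
    exact mem_biUnion hz hzδ
  refine (measure_mono hsub).trans ((measure_biUnion_finset_le _ _).trans ?_)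
  have hb : ∀ z ∈ B, P {ω | δ ≤ ξ z ω} ≤
      ENNReal.ofReal (Real.exp (K / 2) * Real.exp (-δ * (L : ℝ) ^ (1/8 : ℝ))) := by
    intro z _
    have := gauss_tail hξ z (δ := δ) (t := (L : ℝ) ^ (1/8 : ℝ)) (v := K * (L : ℝ) ^ (-(1/4) : ℝ)) (by positivity) (hcov L z hLpos)
      (by positivity)
    refine this.trans (ENNReal.ofReal_le_ofReal ?_)
    rw [← Real.exp_add]
    apply Real.exp_le_exp.2
    have e : (L : ℝ) ^ (-(1/4) : ℝ) * ((L : ℝ) ^ (1/8 : ℝ)) ^ 2 = 1 := by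
      rw [← Real.rpow_natCast, ← Real.rpow_mul (by positivity), ← Real.rpow_add (by positivity)]
      norm_num
    rw [mul_assoc, e]
    linarith
  refine (Finset.sum_le_sum hb).trans ?_
  rw [Finset.sum_const, hBc, nsmul_eq_mul, ← ENNReal.ofReal_natCast, ← ENNReal.ofReal_mul (by positivity)]
  apply ENNReal.ofReal_le_ofReal
  refine le_trans ?_ (hL1 L hL1').le
  have e : ((L : ℝ) ^ (1/8 : ℝ)) ^ ((8 * d : ℕ) : ℝ) = (L : ℝ) ^ d := by
    rw [← Real.rpow_mul (by positivity), ← Real.rpow_natCast]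
    congr 1
    push_cast; ring
  rw [e]
  have : (((2 * (2 * L) + 1) ^ d : ℕ) : ℝ) ≤ 5 ^ d * (L : ℝ) ^ d := by
    rw [← mul_pow]; push_cast
    gcongr; linarith
  calc _ ≤ (5 ^ d * (L : ℝ) ^ d) * (Real.exp (K / 2) * Real.exp (-δ * (L : ℝ) ^ (1/8 : ℝ))) := by gcongr
    _ = _ := by ring

end PartC3

section PartC4

variable {Ω : Type*} [MeasurableSpace Ω] {d : ℕ}

lemma covTrunc_pos (L : ℕ) (x : V d) : 0 < covTrunc d L x x := by
  unfold covTrunc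
  rw [Finset.sum_range_succ']
  have : 0 ≤ ∑ k ∈ Finset.range L, lazyP d (k + 1) x x :=
    Finset.sum_nonneg fun k _ => lazyP_nonneg _ _ _
  have h0 : lazyP d 0 x x = 1 := by simp [lazyP]
  rw [h0]; linarith

lemma single_pos {P : Measure Ω} [IsProbabilityMeasure P] {X : V d → Ω → ℝ} {L : ℕ}
    (hX : IsCGF P X (covTrunc d L)) (h : ℝ) (x : V d) : 0 < P {ω | h ≤ X x ω} := by
  have h1 := hX.2 {x} 1
  simp only [Finset.sum_singleton, Pi.one_apply, one_mul] at h1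
  have h1' : P.map (X x) = gaussianReal 0 (covTrunc d L x x).toNNReal := h1
  have h2 : P {ω | h ≤ X x ω} = P.map (X x) (Ici h) := by
    rw [Measure.map_apply (hX.1 x) measurableSet_Ici]; rfl
  rw [h2, h1', pos_iff_ne_zero]
  intro h3
  have := gaussianReal_absolutelyContinuous' 0
    (v := (covTrunc d L x x).toNNReal) (by simpa using covTrunc_pos L x) h3
  simp at this

lemma Ev_step {P : Measure Ω} [IsProbabilityMeasure P] {X : V d → Ω → ℝ} {C : V d → V d → ℝ}
    (hX : IsCGF P X C) (hF : ∀ Λ, Fac Λ C) (h : ℝ) {S : Set (V d)} (hS : S.Finite)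
    {x y z : V d} (hz : z ∈ S) (hyz : adj y z) :
    P (Ev X h S x y) * P {ω | h ≤ X z ω} ≤ P (Ev X h S x z) := by
  have e := hS.coe_toFinset
  have key := fkg hS.toFinset hX (hF _) h (fun s => ConnIn s {x} {y})
    (fun s => z ∈ s) (fun s t hst hs => hs.mono hst) (fun s t hst hs => hst hs)
  rw [e] at key
  have e1 : {ω | z ∈ {z | h ≤ X z ω} ∩ S} = {ω | h ≤ X z ω} := by
    ext ω; simp [hz]
  rw [e1] at key
  refine key.trans (measure_mono fun ω hω => ?_)
  exact hω.1.trans (connIn_adj hω.1.mem_right hω.2 hyz)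

lemma exists_min_pos (s : Finset ℕ) (f : ℕ → ENNReal) (h : ∀ n ∈ s, f n ≠ 0) :
    ∃ m : ENNReal, m ≠ 0 ∧ m ≤ 1 ∧ ∀ n ∈ s, m ≤ f n := by
  classical
  induction s using Finset.induction_on with
  | empty => exact ⟨1, one_ne_zero, le_rfl, by simp⟩
  | insert a s ha ih =>
    obtain ⟨m, h0, h1, h2⟩ := ih fun n hn => h n (Finset.mem_insert_of_mem hn)
    refine ⟨min (f a) m, ?_, (min_le_right _ _).trans h1, ?_⟩
    · rw [← pos_iff_ne_zero]
      exact lt_min (pos_iff_ne_zero.2 (h a (Finset.mem_insert_self _ _))) (pos_iff_ne_zero.2 h0)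
    · intro n hn
      rcases Finset.mem_insert.1 hn with rfl | hn
      · exact min_le_left _ _
      · exact (min_le_right _ _).trans (h2 n hn)

lemma small_L {P : Measure Ω} [IsProbabilityMeasure P] {X : V d → Ω → ℝ} {L : ℕ} (hL : 1 ≤ L)
    (hX : IsCGF P X (covTrunc d L)) (hd : 0 < d) (h : ℝ) : ∃ b : ENNReal, b ≠ 0 ∧
    ∀ x ∈ boxI (0 : V d) L, ∀ y ∈ boxI (0 : V d) L, b ≤ P (Ev X h (boxI (0 : V d) (2 * L)) x y) := by
  have line : ∀ R : ℕ, ∀ k ≤ R, 0 < P (Ev X h (boxI (0 : V d) R) 0 (fun i => if i = ⟨0, hd⟩ then (k : ℤ) else 0)) := by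
    intro R k
    induction k with
    | zero =>
      intro _
      refine (single_pos hX h 0).trans_le (measure_mono fun ω hω => ?_)
      have e : (fun i => if i = ⟨0, hd⟩ then ((0 : ℕ) : ℤ) else 0) = (0 : V d) := by ext; simp
      rw [e]
      exact connIn_refl ⟨hω, fun i => by simp⟩
    | succ k ih =>
      intro hk
      have h1 := Ev_step (x := 0) (y := fun i => if i = ⟨0, hd⟩ then (k : ℤ) else 0)
        (z := fun i => if i = ⟨0, hd⟩ then ((k + 1 : ℕ) : ℤ) else 0) hX (Fac_trunc hd L) h
        (boxI_finite (0 : V d) R) ?_ ?_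
      · exact (ENNReal.mul_pos (ih (by omega)).ne' (single_pos hX h _).ne').trans_le h1
      · intro i
        by_cases hi : i = ⟨0, hd⟩
        · simp only [hi, if_true, Pi.zero_apply]; omega
        · simp [hi]
      · have := (adj_unit (fun i => if i = ⟨0, hd⟩ then (k : ℤ) else 0) ⟨0, hd⟩).1
        convert this using 1
        ext i
        by_cases hi : i = ⟨0, hd⟩ <;> simp [hi, unitV]
  obtain ⟨b0, hb0, -, hb1⟩ := exists_min_pos (Finset.Icc 1 L) (fun R =>
    P (Ev X h (boxI (0 : V d) R) 0 (fun i => if i = ⟨0, hd⟩ then (R : ℤ) else 0)))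
    (fun R _ => (line R R le_rfl).ne')
  refine ⟨b0 ^ (4 * d + 1), pow_ne_zero _ hb0, ?_⟩
  intro x hx y hy
  refine chain hL hX hd h (fun R hR hRL => ⟨0, _, ⟨⟨0, hd⟩, ?_⟩, hb1 R (Finset.mem_Icc.2 ⟨hR, hRL⟩)⟩) x hx y hy
  simp

lemma large_L {P : Measure Ω} [IsProbabilityMeasure P] {φ X : V d → Ω → ℝ} {L : ℕ} (hL : 1 ≤ L)
    (hX : IsCGF P X (covTrunc d L)) (hd : 0 < d) {h h' c0 : ℝ} (hc0 : 0 < c0)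
    (hcross : ∀ R : ℕ, ENNReal.ofReal c0 ≤
      P {ω | ConnIn (lvl φ h' ω) (box d ((R : ℝ) + 1)) (bdry d (2 * ((R : ℝ) + 1)))})
    (htail : P {ω | ∃ z ∈ boxI (0 : V d) (2 * L), h' - h ≤ φ z ω - X z ω} ≤ ENNReal.ofReal (c0 / 2)) :
    ∀ x ∈ boxI (0 : V d) L, ∀ y ∈ boxI (0 : V d) L,
      ENNReal.ofReal ((c0 / 2 / (5 ^ d) ^ 2) ^ (4 * d + 1) * (L : ℝ) ^ (-(2 * d * (4 * d + 1)) : ℝ)) ≤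
        P (Ev X h (boxI (0 : V d) (2 * L)) x y) := by
  classical
  intro x hx y hy
  have hLr : (1 : ℝ) ≤ L := by exact_mod_cast hL
  obtain ⟨B, hB, hBc⟩ := boxI_card (d := d) (2 * L)
  have hM : (0 : ℝ) < ((5 * L) ^ d) ^ 2 := by positivity
  refine le_trans ?_ (chain (β := ENNReal.ofReal (c0 / 2) / ENNReal.ofReal (((5 * L) ^ d) ^ 2)) hL hX hd h ?_ x hx y hy)
  · rw [← ENNReal.ofReal_div_of_pos hM, ← ENNReal.ofReal_pow (by positivity)]
    apply ENNReal.ofReal_le_ofReal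
    apply le_of_eq
    have e : (L : ℝ) ^ (-(2 * d * (4 * d + 1)) : ℝ) = ((L : ℝ) ^ (2 * d * (4 * d + 1)))⁻¹ := by
      rw [Real.rpow_neg (by positivity), ← Real.rpow_natCast]
      push_cast; rfl
    rw [e, mul_pow, mul_pow, ← div_div (c0 / 2), div_pow _ ((L ^ d : ℝ) ^ 2), ← pow_mul (L : ℝ), ← pow_mul (L : ℝ)]
    rw [show d * 2 * (4 * d + 1) = 2 * d * (4 * d + 1) by ring]
    rw [div_eq_mul_inv _ ((L : ℝ) ^ _)]
  · intro R hR hRL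
    obtain ⟨R', rfl⟩ : ∃ R', R = R' + 1 := ⟨R - 1, by omega⟩
    let s := (B ×ˢ B).filter fun q => ∃ j, (q.2 j - q.1 j).natAbs = R' + 1
    suffices hsuff : ENNReal.ofReal (c0 / 2) ≤ P (⋃ q ∈ s, Ev X h (boxI q.1 (R' + 1)) q.1 q.2) ∧
        (s.card : ENNReal) ≤ ENNReal.ofReal (((5 * L) ^ d) ^ 2) by
      obtain ⟨⟨z, w⟩, hs, hzw⟩ := union_bound (P := P) s (fun q => Ev X h (boxI q.1 (R' + 1)) q.1 q.2)
        (c := ENNReal.ofReal (c0 / 2)) (M := ENNReal.ofReal (((5 * L) ^ d) ^ 2)) (by simpa using hc0)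
        hsuff.2 ENNReal.ofReal_ne_top hsuff.1
      exact ⟨z, w, (Finset.mem_filter.1 hs).2, hzw⟩
    refine And.symm ⟨?_, ?_⟩
    · rw [← ENNReal.ofReal_natCast]
      apply ENNReal.ofReal_le_ofReal
      calc (s.card : ℝ) ≤ ((B ×ˢ B).card : ℕ) := by exact_mod_cast Finset.card_filter_le _ _
        _ = (((2 * (2 * L) + 1) ^ d : ℕ) : ℝ) ^ 2 := by rw [Finset.card_product, hBc]; push_cast; ring
        _ ≤ _ := by
          push_cast
          gcongr; linarith
    · have hsub : {ω | ConnIn (lvl φ h' ω) (box d ((R' : ℝ) + 1)) (bdry d (2 * ((R' : ℝ) + 1)))} ⊆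
          (⋃ q ∈ s, Ev X h (boxI q.1 (R' + 1)) q.1 q.2) ∪
            {ω | ∃ z ∈ boxI (0 : V d) (2 * L), h' - h ≤ φ z ω - X z ω} := by
        intro ω hω
        by_cases hbad : ∃ z ∈ boxI (0 : V d) (2 * L), h' - h ≤ φ z ω - X z ω
        · exact Or.inr hbad
        · left
          obtain ⟨z, hz, w, hj, hc⟩ := crossing rfl hω
          push Not at hbad
          have hzL : z ∈ boxI (0 : V d) L := fun i => (hz i).trans hRL
          have hsubz := boxI_sub hzL hRL
          have hw := hc.mem_right.2
          have hzm : z ∈ B := by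
            rw [← Finset.mem_coe, hB]; exact hsubz fun i => by simp
          have hwm : w ∈ B := by
            rw [← Finset.mem_coe, hB]; exact hsubz hw
          refine mem_biUnion (x := (z, w)) (by simp [s, hzm, hwm, hj]) ?_
          refine hc.mono fun u hu => ⟨?_, hu.2⟩
          have h1 := hbad u (hsubz hu.2)
          have h2 : h' ≤ φ u ω := hu.1
          change h ≤ X u ω
          linarith
      have h1 := (hcross R').trans ((measure_mono hsub).trans (measure_union_le _ _))
      have h2 : ENNReal.ofReal c0 ≤ P (⋃ q ∈ s, Ev X h (boxI q.1 (R' + 1)) q.1 q.2) + ENNReal.ofReal (c0 / 2) :=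
        h1.trans (by gcongr)
      have h3 : ENNReal.ofReal c0 = ENNReal.ofReal (c0 / 2) + ENNReal.ofReal (c0 / 2) := by
        rw [← ENNReal.ofReal_add (by positivity) (by positivity)]; ring_nf
      rw [h3] at h2
      exact ENNReal.le_of_add_le_add_right ENNReal.ofReal_ne_top h2

lemma main_cond (hd : 3 ≤ d) {P : Measure Ω} [IsProbabilityMeasure P] {φ : V d → Ω → ℝ}
    {φL : ℕ → V d → Ω → ℝ} (hcoup : IsTruncCoupling d P φ φL) {h h' c0 : ℝ} (hh : h < h')
    (hc0 : 0 < c0)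
    (hcross : ∀ R : ℕ, ENNReal.ofReal c0 ≤
      P {ω | ConnIn (lvl φ h' ω) (box d ((R : ℝ) + 1)) (bdry d (2 * ((R : ℝ) + 1)))}) :
    ∃ c : ℝ, 0 < c ∧ ∀ L : ℕ, 1 ≤ L → ∀ x ∈ boxI (0 : V d) L, ∀ y ∈ boxI (0 : V d) L,
      ENNReal.ofReal (c * (L : ℝ) ^ (-(2 * d * (4 * d + 1)) : ℝ)) ≤
        P (Ev (φL L) h (boxI (0 : V d) (2 * L)) x y) := by
  obtain ⟨L0, hL0, htail⟩ := tail_small hd (sub_pos.2 hh) (half_pos hc0)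
  have hsm : ∀ L : ℕ, ∃ b : ENNReal, b ≠ 0 ∧ (1 ≤ L →
      ∀ x ∈ boxI (0 : V d) L, ∀ y ∈ boxI (0 : V d) L, b ≤ P (Ev (φL L) h (boxI (0 : V d) (2 * L)) x y)) := by
    intro L
    by_cases hL : 1 ≤ L
    · obtain ⟨b, hb, hb'⟩ := small_L hL (hcoup L).1 (by omega) h
      exact ⟨b, hb, fun _ => hb'⟩
    · exact ⟨1, one_ne_zero, fun h => absurd h hL⟩
  choose b hb hb' using hsm
  obtain ⟨m, hm0, hm1, hm2⟩ := exists_min_pos (Finset.range (L0 + 1)) b (fun n _ => hb n)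
  have hmt : m ≠ ⊤ := ne_top_of_le_ne_top ENNReal.one_ne_top hm1
  have hd0 : (0 : ℝ) ≤ 2 * d * (4 * d + 1) := by positivity
  refine ⟨min m.toReal ((c0 / 2 / (5 ^ d) ^ 2) ^ (4 * d + 1)),
    lt_min (ENNReal.toReal_pos hm0 hmt) (by positivity), ?_⟩
  intro L hL x hx y hy
  have hLr : (1 : ℝ) ≤ L := by exact_mod_cast hL
  rcases le_total L0 L with h1 | h1
  · refine le_trans ?_ (large_L hL (hcoup L).1 (by omega) hc0 hcross
      (htail P (fun x ω => φ x ω - φL L x ω) L h1 (hcoup L).2.1) x hx y hy)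
    apply ENNReal.ofReal_le_ofReal
    gcongr
    exact min_le_right _ _
  · refine le_trans ?_ (hb' L hL x hx y hy)
    refine le_trans ?_ (hm2 L (Finset.mem_range.2 (by omega)))
    conv_rhs => rw [← ENNReal.ofReal_toReal hmt]
    apply ENNReal.ofReal_le_ofReal
    have : (L : ℝ) ^ (-(2 * d * (4 * d + 1)) : ℝ) ≤ 1 :=
      Real.rpow_le_one_of_one_le_of_nonpos hLr (by linarith)
    calc _ ≤ m.toReal * 1 := by
          gcongr
          exact min_le_left _ _
      _ = _ := mul_one _

end PartC4

section PartD1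

variable {Ω : Type*} [MeasurableSpace Ω] {d : ℕ}

lemma iadd {P : Measure Ω} {f g : Ω → ℝ} (hf : Integrable f P) (hg : Integrable g P) :
    Integrable (fun ω => f ω + g ω) P := hf.add hg

lemma imul {P : Measure Ω} {f g : Ω → ℝ} (hf : MemLp f 2 P) (hg : MemLp g 2 P) :
    Integrable (fun ω => f ω * g ω) P := hf.integrable_mul hg

lemma gauss_mom {P : Measure Ω} {Y : Ω → ℝ} (hm : Measurable Y) {v : NNReal}
    (h : P.map Y = gaussianReal 0 v) : MemLp Y 2 P ∧ ∫ ω, Y ω ∂P = 0 ∧ ∫ ω, Y ω ^ 2 ∂P = v := by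
  have h2 := memLp_id_gaussianReal' (μ := 0) (v := v) 2 (by simp)
  have h3 := integral_id_gaussianReal (μ := 0) (v := v)
  have h4 := variance_id_gaussianReal (μ := 0) (v := v)
  rw [variance_of_integral_eq_zero (by fun_prop) (by simp)] at h4
  refine ⟨?_, ?_, ?_⟩
  · rw [← h] at h2
    exact h2.comp_of_map hm.aemeasurable
  · rw [← h, integral_map hm.aemeasurable (by fun_prop)] at h3
    exact h3
  · rw [← h, integral_map hm.aemeasurable (by fun_prop)] at h4
    exact h4

lemma cgf_var {P : Measure Ω} {X : V d → Ω → ℝ} {C : V d → V d → ℝ} (hX : IsCGF P X C) (x : V d) :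
    MemLp (X x) 2 P ∧ ∫ ω, X x ω ∂P = 0 ∧ ∫ ω, X x ω ^ 2 ∂P = (C x x).toNNReal := by
  have h1 := hX.2 {x} 1
  simp only [Finset.sum_singleton, Pi.one_apply, one_mul] at h1
  exact gauss_mom (hX.1 x) h1

lemma cgf_cov {P : Measure Ω} {X : V d → Ω → ℝ} {C : V d → V d → ℝ} (hX : IsCGF P X C)
    (hs : ∀ x y, C x y = C y x)
    (hp : ∀ (Λ : Finset (V d)) (a : V d → ℝ), 0 ≤ ∑ x ∈ Λ, ∑ y ∈ Λ, a x * a y * C x y) (x y : V d) :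
    ∫ ω, X x ω * X y ω ∂P = C x y := by
  have hv : ∀ x, ∫ ω, X x ω ^ 2 ∂P = C x x := by
    intro x
    rw [(cgf_var hX x).2.2, Real.coe_toNNReal]
    simpa using hp {x} 1
  by_cases hxy : x = y
  · subst hxy
    simpa [sq] using hv x
  have h1 := hX.2 {x, y} 1
  have hp1 := hp {x, y} 1
  simp only [Finset.sum_pair hxy, Pi.one_apply, one_mul] at h1 hp1
  have h2 := (gauss_mom ((hX.1 x).add (hX.1 y)) h1).2.2
  rw [Real.coe_toNNReal _ hp1] at h2
  have hx := (cgf_var hX x).1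
  have hy := (cgf_var hX y).1
  have e : ∀ ω, (X x + X y) ω ^ 2 = X x ω ^ 2 + X y ω ^ 2 + 2 * (X x ω * X y ω) := by
    intro ω; simp only [Pi.add_apply]; ring
  simp_rw [e] at h2
  rw [integral_add (iadd hx.integrable_sq hy.integrable_sq) ((imul hx hy).const_mul 2),
    integral_add hx.integrable_sq hy.integrable_sq, integral_const_mul, hv, hv, hs y x] at h2
  linarith

lemma phi_cov (hd : 3 ≤ d) {P : Measure Ω} [IsProbabilityMeasure P] {φ : V d → Ω → ℝ}
    {φL : ℕ → V d → Ω → ℝ} (hcoup : IsTruncCoupling d P φ φL) (x y : V d) :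
    ∫ ω, φ x ω * φ y ω ∂P = Gf d x y := by
  obtain ⟨h1, h2, h3⟩ := hcoup 0
  have e1 := cgf_cov h1 (fun x y => by simp only [covTrunc, lazyP_symm _ x y])
    (fun Λ a => (Fac_trunc (by omega) 0 Λ).psd a) x y
  have e2 := cgf_cov h2 (fun x y => by simp only [covTail, lazyP_symm _ x y])
    (fun Λ a => psd_tail hd 0 Λ a) x y
  have cross : ∀ x y, ∫ ω, φL 0 x ω * (φ y ω - φL 0 y ω) ∂P = 0 := by
    intro x y
    have hi : IndepFun (φL 0 x) (fun ω => φ y ω - φL 0 y ω) P :=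
      h3.comp (measurable_pi_apply x) (measurable_pi_apply y)
    rw [hi.integral_fun_mul_eq_mul_integral (h1.1 x).aestronglyMeasurable
      (h2.1 y).aestronglyMeasurable, (cgf_var h1 x).2.1, zero_mul]
  have e3 := cross x y
  have e4 := cross y x
  have m1 := fun x => (cgf_var h1 x).1
  have m2 := fun x => (cgf_var h2 x).1
  unfold Gf
  have e : ∀ ω, φ x ω * φ y ω = φL 0 x ω * φL 0 y ω + (φ x ω - φL 0 x ω) * (φ y ω - φL 0 y ω) +
      (φL 0 x ω * (φ y ω - φL 0 y ω) + φL 0 y ω * (φ x ω - φL 0 x ω)) := by intro ω; ring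
  simp_rw [e]
  have i1 : Integrable (fun ω => φL 0 x ω * φL 0 y ω) P := (m1 x).integrable_mul (m1 y)
  have i2 : Integrable (fun ω => (φ x ω - φL 0 x ω) * (φ y ω - φL 0 y ω)) P :=
    (m2 x).integrable_mul (m2 y)
  have i3 : Integrable (fun ω => φL 0 x ω * (φ y ω - φL 0 y ω)) P := (m1 x).integrable_mul (m2 y)
  have i4 : Integrable (fun ω => φL 0 y ω * (φ x ω - φL 0 x ω)) P := (m1 y).integrable_mul (m2 x)
  rw [integral_add (iadd i1 i2) (iadd i3 i4), integral_add i1 i2, integral_add i3 i4, e1, e2, e3, e4]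
  ring

lemma span_gauss {P : Measure Ω} {X : V d → Ω → ℝ} {C : V d → V d → ℝ} (hX : IsCGF P X C)
    {Y : Ω → ℝ} (hY : Y ∈ Submodule.span ℝ (range X)) :
    Measurable Y ∧ ∃ v, P.map Y = gaussianReal 0 v := by
  obtain ⟨c, rfl⟩ := (Finsupp.mem_span_range_iff_exists_finsupp).1 hY
  have e : (c.sum fun i a => a • X i) = fun ω => ∑ x ∈ c.support, c x * X x ω := by
    funext ω; simp [Finsupp.sum]
  rw [e]
  exact ⟨Finset.measurable_fun_sum _ fun x _ => (hX.1 x).const_mul _, _, hX.2 c.support c⟩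

lemma span_law {P : Measure Ω} {X : V d → Ω → ℝ} {C : V d → V d → ℝ} (hX : IsCGF P X C)
    {Y Z : Ω → ℝ} (hY : Y ∈ Submodule.span ℝ (range X)) (hZ : Z ∈ Submodule.span ℝ (range X))
    (h : ∫ ω, Y ω * Z ω ∂P = 0) : P.map (Y + Z) = P.map (Y - Z) := by
  obtain ⟨m1, v1, h1⟩ := span_gauss hX (Submodule.add_mem _ hY hZ)
  obtain ⟨m2, v2, h2⟩ := span_gauss hX (Submodule.sub_mem _ hY hZ)
  have g1 := (gauss_mom m1 h1).2.2
  have g2 := (gauss_mom m2 h2).2.2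
  obtain ⟨mY, vY, hY'⟩ := span_gauss hX hY
  obtain ⟨mZ, vZ, hZ'⟩ := span_gauss hX hZ
  have lY := (gauss_mom mY hY').1
  have lZ := (gauss_mom mZ hZ').1
  have e1 : ∀ ω, (Y + Z) ω ^ 2 = (Y ω ^ 2 + Z ω ^ 2) + 2 * (Y ω * Z ω) := by
    intro ω; simp only [Pi.add_apply]; ring
  have e2 : ∀ ω, (Y - Z) ω ^ 2 = (Y ω ^ 2 + Z ω ^ 2) - 2 * (Y ω * Z ω) := by
    intro ω; simp only [Pi.sub_apply]; ring
  simp_rw [e1] at g1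
  simp_rw [e2] at g2
  have i3 : Integrable (fun ω => Y ω * Z ω) P := lY.integrable_mul lZ
  rw [integral_add (iadd lY.integrable_sq lZ.integrable_sq) (i3.const_mul 2), integral_const_mul, h] at g1
  rw [integral_sub (iadd lY.integrable_sq lZ.integrable_sq) (i3.const_mul 2), integral_const_mul, h] at g2
  have : v1 = v2 := by
    apply NNReal.coe_injective
    linarith
  rw [h1, h2, this]

lemma Gf_symm (x y : V d) : Gf d x y = Gf d y x := by
  simp only [Gf, covTrunc, covTail, lazyP_symm _ x y]

lemma harm (hd : 3 ≤ d) {P : Measure Ω} [IsProbabilityMeasure P] {φ : V d → Ω → ℝ}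
    {C : V d → V d → ℝ} (hφ : IsCGF P φ C) (hcov : ∀ x y, ∫ ω, φ x ω * φ y ω ∂P = Gf d x y)
    (Λ : Finset (V d)) (x : V d) (hx : x ∉ Λ) (B : Set (Λ → ℝ)) (hB : MeasurableSet B) :
    ∫ ω in restr Λ φ ⁻¹' B, φ x ω ∂P = (1 / (2 * d)) * ∑ i : Fin d,
      ((∫ ω in restr Λ φ ⁻¹' B, φ (x + unitV d i) ω ∂P) +
        ∫ ω in restr Λ φ ⁻¹' B, φ (x - unitV d i) ω ∂P) := by
  classical
  let η : Ω → ℝ := fun ω => φ x ω - (1 / (2 * d)) * ∑ i : Fin d, (φ (x + unitV d i) ω + φ (x - unitV d i) ω)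
  have hsp : ∀ y, φ y ∈ Submodule.span ℝ (range φ) := fun y => Submodule.subset_span ⟨y, rfl⟩
  have hηs : η ∈ Submodule.span ℝ (range φ) := by
    have : η = φ x - (1 / (2 * d) : ℝ) • ∑ i : Fin d, (φ (x + unitV d i) + φ (x - unitV d i)) := by
      funext ω; simp [η]
    rw [this]
    exact Submodule.sub_mem _ (hsp _) (Submodule.smul_mem _ _ (Submodule.sum_mem _ fun i _ =>
      Submodule.add_mem _ (hsp _) (hsp _)))
  obtain ⟨mη, vη, lη⟩ := span_gauss hφ hηs
  have Lη := (gauss_mom mη lη).1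
  have Lφ := fun y => (cgf_var hφ y).1
  have iφ : ∀ y z, Integrable (fun ω => φ y ω * φ z ω) P := fun y z => (Lφ y).integrable_mul (Lφ z)
  have horth : ∀ z ∈ Λ, ∫ ω, φ z ω * η ω ∂P = 0 := by
    intro z hz
    have e : ∀ ω, φ z ω * η ω = φ z ω * φ x ω - (1 / (2 * d)) * ∑ i : Fin d,
        (φ z ω * φ (x + unitV d i) ω + φ z ω * φ (x - unitV d i) ω) := by
      intro ω
      simp only [η, mul_sub, ← mul_add, ← Finset.mul_sum]
      ring
    simp_rw [e]
    rw [integral_sub (iφ _ _) (Integrable.const_mul (integrable_finsetSum _ fun i _ =>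
      iadd (iφ _ _) (iφ _ _)) _), integral_const_mul, integral_finsetSum _ (fun i _ =>
      iadd (iφ _ _) (iφ _ _))]
    have : ∀ i : Fin d, ∫ ω, (φ z ω * φ (x + unitV d i) ω + φ z ω * φ (x - unitV d i) ω) ∂P =
        Gf d (x + unitV d i) z + Gf d (x - unitV d i) z := by
      intro i
      rw [integral_add (iφ _ _) (iφ _ _), hcov, hcov, Gf_symm z, Gf_symm z]
    simp_rw [this]
    rw [hcov, Gf_symm z, Gf_green hd]
    have : x ≠ z := fun h => hx (h ▸ hz)
    simp [this]
  let Gp : ℝ → Ω → (Option Λ → ℝ) := fun s ω o => o.elim (s * η ω) (fun z => φ z ω)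
  have mG : ∀ s, Measurable (Gp s) := by
    intro s
    refine measurable_pi_lambda _ fun o => ?_
    cases o with
    | none => exact mη.const_mul s
    | some z => exact hφ.1 z
  have hlaw : P.map (Gp 1) = P.map (Gp (-1)) := by
    have := Measure.isFiniteMeasure_map P (Gp 1)
    have := Measure.isFiniteMeasure_map P (Gp (-1))
    refine cramer_wold fun a => ?_
    rw [Measure.map_map (by fun_prop) (mG _), Measure.map_map (by fun_prop) (mG _)]
    have hY : (∑ z : Λ, a (some z) • φ z) ∈ Submodule.span ℝ (range φ) :=
      Submodule.sum_mem _ fun z _ => Submodule.smul_mem _ _ (hsp _)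
    have key := span_law hφ hY (Submodule.smul_mem _ (a none) hηs) ?_
    · convert key using 2
      · funext ω; simp [Gp, Fintype.sum_option, add_comm]
      · funext ω; simp [Gp, Fintype.sum_option]; ring
    · have e : ∀ ω, (∑ z : Λ, a (some z) • φ z) ω * (a none • η) ω =
          ∑ z : Λ, (a (some z) * a none) * (φ z ω * η ω) := by
        intro ω
        simp only [Finset.sum_apply, Pi.smul_apply, smul_eq_mul, Finset.sum_mul]
        exact Finset.sum_congr rfl fun z _ => by ring
      simp_rw [e]
      rw [integral_finsetSum _ fun (z : Λ) _ => (imul (Lφ z) Lη).const_mul (a (some z) * a none)]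
      refine Finset.sum_eq_zero fun z _ => ?_
      rw [integral_const_mul, horth z z.2, mul_zero]
  let F : (Option Λ → ℝ) → ℝ := fun v => indicator {v | (fun z : Λ => v (some z)) ∈ B} (fun v => v none) v
  have mF : Measurable F := by
    refine Measurable.indicator (measurable_pi_apply _) ?_
    have : Measurable (fun (v : Option Λ → ℝ) (z : Λ) => v (some z)) := by fun_prop
    exact this hB
  have hBm : MeasurableSet (restr Λ φ ⁻¹' B) := measurable_restr hφ.1 hB
  have hF : ∀ s, ∫ v, F v ∂(P.map (Gp s)) = s * ∫ ω in restr Λ φ ⁻¹' B, η ω ∂P := by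
    intro s
    rw [integral_map (mG s).aemeasurable mF.aestronglyMeasurable, ← integral_const_mul,
      ← integral_indicator hBm]
    rfl
  have h0 : ∫ ω in restr Λ φ ⁻¹' B, η ω ∂P = 0 := by
    have h1 := hF 1
    have h2 := hF (-1)
    rw [hlaw] at h1
    linarith
  have I : ∀ y, Integrable (φ y) (P.restrict (restr Λ φ ⁻¹' B)) := fun y =>
    ((Lφ y).integrable (by norm_num)).restrict
  simp only [η] at h0
  rw [integral_sub (I _) (Integrable.const_mul (integrable_finsetSum _ fun i _ =>
      iadd (I _) (I _)) _), integral_const_mul, integral_finsetSum _ (fun i _ =>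
      iadd (I _) (I _))] at h0
  have : ∀ i : Fin d, ∫ ω in restr Λ φ ⁻¹' B, (φ (x + unitV d i) ω + φ (x - unitV d i) ω) ∂P =
      ((∫ ω in restr Λ φ ⁻¹' B, φ (x + unitV d i) ω ∂P) +
        ∫ ω in restr Λ φ ⁻¹' B, φ (x - unitV d i) ω ∂P) := fun i => integral_add (I _) (I _)
  simp_rw [this] at h0
  linarith

end PartD1

section PartD2

variable {Ω : Type*} [MeasurableSpace Ω] {d : ℕ}

def Cl (D s : Set (V d)) : Set (V d) := {z | ConnIn s D {z}}

open Classical in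
def UU (Λ : Finset (V d)) (D s : Set (V d)) : Finset (V d) :=
  Λ.filter fun z => z ∉ D ∧ z ∉ Cl D s ∧ ∀ w, adj z w → w ∉ Cl D s

lemma mem_UU {Λ : Finset (V d)} {D s : Set (V d)} {z : V d} : z ∈ UU Λ D s ↔
    z ∈ Λ ∧ z ∉ D ∧ z ∉ Cl D s ∧ ∀ w, adj z w → w ∉ Cl D s := by
  simp [UU]

lemma Cl_seed {D s : Set (V d)} {x : V d} (hD : x ∈ D) (hs : x ∈ s) : x ∈ Cl D s :=
  connIn_exists.2 ⟨x, hD, x, rfl, connIn_refl hs⟩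

lemma Cl_step {D s : Set (V d)} {x y : V d} (hx : x ∈ Cl D s) (hy : y ∈ s) (h : adj x y) :
    y ∈ Cl D s := by
  obtain ⟨a, ha, b, hb, hab⟩ := connIn_exists.1 hx
  rw [mem_singleton_iff] at hb
  subst hb
  exact connIn_exists.2 ⟨a, ha, y, rfl, hab.trans (connIn_adj hab.mem_right hy h)⟩

lemma Cl_ind {D s : Set (V d)} {T : Set (V d)} (h0 : ∀ x ∈ D, x ∈ s → x ∈ T)
    (h1 : ∀ x ∈ T, ∀ y ∈ s, x ∈ Cl D s → adj x y → y ∈ T) : Cl D s ⊆ T := by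
  intro x hx
  obtain ⟨a, ha, b, hb, hab⟩ := connIn_exists.1 hx
  rw [mem_singleton_iff] at hb
  subst hb
  obtain ⟨has, hr⟩ := connIn_iff.1 hab
  suffices b ∈ T ∧ b ∈ Cl D s from this.1
  clear hab hx
  induction hr with
  | refl => exact ⟨h0 a ha has, Cl_seed ha has⟩
  | tail _ hbc ih => exact ⟨h1 _ ih.1 _ hbc.2 ih.2 hbc.1, Cl_step ih.2 hbc.2 hbc.1⟩

lemma Cl_eq {Λ : Finset (V d)} {D s s' : Set (V d)}
    (h : ∀ z, z ∉ UU Λ D s → (z ∈ s ↔ z ∈ s')) : Cl D s = Cl D s' := by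
  apply Subset.antisymm
  · refine Cl_ind (fun x hD hs => Cl_seed hD ((h x ?_).1 hs)) fun x hx y hy hxs hxy =>
      Cl_step hx ((h y ?_).1 hy) hxy
    · exact fun hu => (mem_UU.1 hu).2.1 hD
    · exact fun hu => (mem_UU.1 hu).2.2.1 (Cl_step hxs hy hxy)
  · refine Cl_ind (fun x hD hs => Cl_seed hD ((h x ?_).2 hs)) fun x hx y hy hxs hxy =>
      Cl_step hx ((h y ?_).2 hy) hxy
    · exact fun hu => (mem_UU.1 hu).2.1 hD
    · exact fun hu => (mem_UU.1 hu).2.2.2 x (adj_symm hxy) hx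

lemma UU_eq {Λ : Finset (V d)} {D s s' : Set (V d)}
    (h : ∀ z, z ∉ UU Λ D s → (z ∈ s ↔ z ∈ s')) : UU Λ D s = UU Λ D s' := by
  ext z
  rw [mem_UU, mem_UU, Cl_eq h]

lemma UU_diff {Λ u : Finset (V d)} {D s : Set (V d)} : UU Λ D s = u ↔ UU Λ D (s \ u) = u := by
  constructor
  · intro h
    rw [← UU_eq (s := s), h]
    intro z hz
    rw [h] at hz
    simp [hz]
  · intro h
    rw [← UU_eq (s := s \ u), h]
    intro z hz
    rw [h] at hz
    simp [hz]

lemma notMem_of_UU {Λ : Finset (V d)} {D s : Set (V d)} {w : V d} (h1 : w ∈ Λ)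
    (h2 : w ∉ Cl D s) (h3 : w ∉ UU Λ D s) : w ∉ s := by
  intro hs
  apply h3
  refine mem_UU.2 ⟨h1, fun hD => h2 (Cl_seed hD hs), h2, fun v hv hvc => h2 (Cl_step hvc hs (adj_symm hv))⟩

lemma max_princ (hd : 0 < d) (m : V d → ℝ) (u : Finset (V d)) (M : ℝ)
    (hh : ∀ x ∈ u, m x = (1 / (2 * d)) * ∑ i : Fin d, (m (x + unitV d i) + m (x - unitV d i)))
    (hb : ∀ x ∈ u, ∀ w, w ∉ u → adj x w → m w ≤ M) : ∀ x ∈ u, m x ≤ M := by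
  classical
  by_contra! hcon
  obtain ⟨x0, hx0, hM0⟩ := hcon
  obtain ⟨x1, hx1, hmax⟩ := u.exists_max_image m ⟨x0, hx0⟩
  have hM1 : M < m x1 := hM0.trans_le (hmax x0 hx0)
  obtain ⟨x, hx, hx'⟩ := (u.filter fun x => m x = m x1).exists_max_image (fun x => x ⟨0, hd⟩)
    ⟨x1, by simp [hx1]⟩
  rw [Finset.mem_filter] at hx
  have nb : ∀ w, adj x w → m w ≤ m x1 := by
    intro w hw
    by_cases hwu : w ∈ u
    · exact hmax w hwu
    · exact (hb x hx.1 w hwu hw).trans hM1.le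
  have hlt : m (x + unitV d ⟨0, hd⟩) < m x1 := by
    refine lt_of_le_of_ne (nb _ (adj_unit x _).1) fun he => ?_
    have hin : x + unitV d ⟨0, hd⟩ ∈ u := by
      by_contra hn
      have := hb x hx.1 _ hn (adj_unit x _).1
      linarith
    have := hx' _ (Finset.mem_filter.2 ⟨hin, he⟩)
    simp [unitV] at this
  have hsum : ∑ i : Fin d, (m (x + unitV d i) + m (x - unitV d i)) < ∑ i : Fin d, (m x1 + m x1) := by
    refine Finset.sum_lt_sum (fun i _ => add_le_add (nb _ (adj_unit x i).1) (nb _ (adj_unit x i).2))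
      ⟨⟨0, hd⟩, Finset.mem_univ _, add_lt_add_of_lt_of_le hlt (nb _ (adj_unit x _).2)⟩
  have h1 := hh x hx.1
  rw [hx.2] at h1
  have hd' : (0 : ℝ) < d := by exact_mod_cast hd
  simp only [Finset.sum_const, Finset.card_univ, Fintype.card_fin, nsmul_eq_mul] at hsum
  rw [h1] at hsum
  have : (d : ℝ) * (1 / (2 * d) * ∑ i : Fin d, (m (x + unitV d i) + m (x - unitV d i)) +
      1 / (2 * d) * ∑ i : Fin d, (m (x + unitV d i) + m (x - unitV d i))) =
      ∑ i : Fin d, (m (x + unitV d i) + m (x - unitV d i)) := by field_simp; ring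
  rw [← h1] at this hsum
  linarith

lemma set_le {P : Measure Ω} [IsProbabilityMeasure P] {f : Ω → ℝ} (hf : Integrable f P) {A : Set Ω}
    (hA : MeasurableSet A) {c : ℝ} (h : ∀ ω ∈ A, f ω ≤ c) : ∫ ω in A, f ω ∂P ≤ c * P.real A := by
  have := setIntegral_mono_on hf.integrableOn (integrable_const c).integrableOn hA h
  simpa [mul_comm] using this

lemma zero_conn (hd : 3 ≤ d) {P : Measure Ω} [IsProbabilityMeasure P] {φ : V d → Ω → ℝ}
    {C : V d → V d → ℝ} (hφ : IsCGF P φ C) (hcov : ∀ x y, ∫ ω, φ x ω * φ y ω ∂P = Gf d x y)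
    (Λ : Finset (V d)) (D : Set (V d)) (h0 : (0 : V d) ∈ Λ)
    (hΛ : ∀ x ∈ Λ, x ∉ D → ∀ w, adj x w → w ∈ Λ) (h : ℝ) :
    ∫ ω in {ω | (0 : V d) ∉ Cl D ({z | h ≤ φ z ω} ∩ (Λ : Set (V d)))}, φ 0 ω ∂P ≤
      h * P.real {ω | (0 : V d) ∉ Cl D ({z | h ≤ φ z ω} ∩ (Λ : Set (V d)))} := by
  classical
  set s : Ω → Set (V d) := fun ω => {z | h ≤ φ z ω} ∩ (Λ : Set (V d)) with hs
  set E : Set Ω := {ω | (0 : V d) ∉ Cl D (s ω)} with hE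
  let A : Finset (V d) → Set Ω := fun u => {ω | UU Λ D (s ω) = u}
  have mE : MeasurableSet E := meas_ev Λ hφ.1 h (fun s => (0 : V d) ∉ Cl D s)
  have mA : ∀ u, MeasurableSet (A u) := fun u => meas_ev Λ hφ.1 h (fun s => UU Λ D s = u)
  have Iφ : ∀ y, Integrable (φ y) P := fun y => (cgf_var hφ y).1.integrable (by norm_num)
  have hEu : E = ⋃ u ∈ Λ.powerset, (A u ∩ E) := by
    ext ω
    simp only [mem_iUnion, Finset.mem_powerset, exists_prop]
    constructor
    · intro hω
      exact ⟨UU Λ D (s ω), fun z hz => (mem_UU.1 hz).1, rfl, hω⟩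
    · rintro ⟨u, _, _, hω⟩
      exact hω
  have hdisj : Set.Pairwise (Λ.powerset : Set (Finset (V d))) (Function.onFun Disjoint fun u => A u ∩ E) := by
    intro u _ v _ huv
    refine Set.disjoint_left.2 fun ω h1 h2 => huv ?_
    exact h1.1.symm.trans h2.1
  have hle : ∀ u ∈ Λ.powerset, ∫ ω in A u ∩ E, φ 0 ω ∂P ≤ h * P.real (A u ∩ E) := by
    intro u _
    by_cases hu : (0 : V d) ∈ u
    · have hAE : A u ∩ E = A u := by
        apply inter_eq_left.2
        intro ω hω
        have hω' : UU Λ D (s ω) = u := hω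
        rw [← hω'] at hu
        exact (mem_UU.1 hu).2.2.1
      rw [hAE]
      have hAr : A u = restr (Λ \ u) φ ⁻¹' {f | UU Λ D (LS h f) = u} := by
        ext ω
        have : LS h (restr (Λ \ u) φ ω) = s ω \ u := by
          rw [LS_restr]
          ext z
          simp [s, and_assoc]
        simp only [A, mem_ofPred_eq, mem_preimage, this]
        exact UU_diff
      refine max_princ (by omega) (fun x => ∫ ω in A u, φ x ω ∂P) u (h * P.real (A u)) ?_ ?_ 0 hu
      · intro x hx
        simp only [hAr]
        exact harm hd hφ hcov (Λ \ u) x (by simp [hx]) _ (meas_LS h fun s => UU Λ D s = u)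
      · intro x hx w hw hxw
        refine set_le (Iφ w) (mA u) fun ω hω => ?_
        have hω' : UU Λ D (s ω) = u := hω
        rw [← hω'] at hx hw
        have hx' := mem_UU.1 hx
        have hwΛ := hΛ x hx'.1 hx'.2.1 w hxw
        have := notMem_of_UU hwΛ (hx'.2.2.2 w hxw) hw
        by_contra! hcon
        exact this ⟨hcon.le, hwΛ⟩
    · refine set_le (Iφ 0) ((mA u).inter mE) fun ω hω => ?_
      have hω' : UU Λ D (s ω) = u := hω.1
      rw [← hω'] at hu
      have := notMem_of_UU h0 hω.2 hu
      by_contra! hcon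
      exact this ⟨hcon.le, h0⟩
  have e1 : ∫ ω in E, φ 0 ω ∂P = ∑ u ∈ Λ.powerset, ∫ ω in A u ∩ E, φ 0 ω ∂P := by
    conv_lhs => rw [hEu]
    exact integral_biUnion_finset _ (fun u _ => (mA u).inter mE) hdisj fun u _ => (Iφ 0).integrableOn
  have e2 : P.real E = ∑ u ∈ Λ.powerset, P.real (A u ∩ E) := by
    conv_lhs => rw [hEu]
    exact measureReal_biUnion_finset hdisj (fun u _ => (mA u).inter mE)
  rw [e1, e2, Finset.mul_sum]
  exact Finset.sum_le_sum hle

lemma cross_low (hd : 3 ≤ d) {P : Measure Ω} [IsProbabilityMeasure P] {φ : V d → Ω → ℝ}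
    {C : V d → V d → ℝ} (hφ : IsCGF P φ C) (hcov : ∀ x y, ∫ ω, φ x ω * φ y ω ∂P = Gf d x y)
    (R : ℕ) : ENNReal.ofReal (1 / ((∫ ω, φ 0 ω ^ 2 ∂P) + 3)) ≤
      P {ω | ConnIn (lvl φ (-1) ω) (box d ((R : ℝ) + 1)) (bdry d (2 * ((R : ℝ) + 1)))} := by
  obtain ⟨Λ, hΛ, -⟩ := boxI_card (d := d) (2 * (R + 1))
  have hr : 2 * ((R : ℝ) + 1) = ((2 * (R + 1) : ℕ) : ℝ) := by push_cast; ring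
  have memΛ : ∀ x : V d, x ∈ Λ ↔ x ∈ boxI (0 : V d) (2 * (R + 1)) := fun x => by
    rw [← hΛ]; simp
  let D : Set (V d) := bdry d (2 * ((R : ℝ) + 1))
  have hz := zero_conn hd hφ hcov Λ D ((memΛ 0).2 (by simp [boxI])) ?_ (-1)
  swap
  · intro x hx hxD w hw
    rw [memΛ] at hx ⊢
    intro i
    have h1 := adj_coord hw i
    have h2 := hx i
    have h3 : (x i).natAbs ≠ 2 * (R + 1) := fun h => hxD (mem_bdry hr hx h)
    simp only [Pi.zero_apply, sub_zero] at h2 ⊢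
    omega
  set E : Set Ω := {ω | (0 : V d) ∉ Cl D ({z | -1 ≤ φ z ω} ∩ (Λ : Set (V d)))} with hE
  have mE : MeasurableSet E := meas_ev Λ hφ.1 (-1) (fun s => (0 : V d) ∉ Cl D s)
  have hsub : Eᶜ ⊆ {ω | ConnIn (lvl φ (-1) ω) (box d ((R : ℝ) + 1)) (bdry d (2 * ((R : ℝ) + 1)))} := by
    intro ω hω
    have hω' : (0 : V d) ∈ Cl D ({z | -1 ≤ φ z ω} ∩ (Λ : Set (V d))) := by
      by_contra hn
      exact hω hn
    obtain ⟨a, ha, b, hb, hab⟩ := connIn_exists.1 hω'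
    rw [mem_singleton_iff] at hb
    subst hb
    refine connIn_exists.2 ⟨0, ?_, a, ha, hab.symm.mono inter_subset_left⟩
    intro i
    simp only [Pi.zero_apply, Int.cast_zero, sub_zero, abs_zero]
    positivity
  refine le_trans ?_ (measure_mono hsub)
  rw [← ofReal_measureReal]
  apply ENNReal.ofReal_le_ofReal
  obtain ⟨L2, hmean, -⟩ := cgf_var hφ 0
  have I0 : Integrable (φ 0) P := L2.integrable (by norm_num)
  have I2 : Integrable (fun ω => φ 0 ω ^ 2) P := L2.integrable_sq
  set G := ∫ ω, φ 0 ω ^ 2 ∂P with hG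
  have hG0 : 0 ≤ G := integral_nonneg fun ω => sq_nonneg _
  have hsplit := integral_add_compl mE I0
  have hp : P.real E = 1 - P.real Eᶜ := by
    have := probReal_add_probReal_compl (μ := P) mE
    linarith
  have hb : ∫ ω in Eᶜ, φ 0 ω ∂P ≤ (G + 1) / 2 * P.real Eᶜ + G / (2 * (G + 1)) := by
    have i1 : Integrable (fun ω => φ 0 ω ^ 2 / (2 * (G + 1))) P := I2.div_const _
    have h1 : ∫ ω in Eᶜ, φ 0 ω ∂P ≤ ∫ ω in Eᶜ, ((G + 1) / 2 + φ 0 ω ^ 2 / (2 * (G + 1))) ∂P := by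
      refine setIntegral_mono_on I0.integrableOn
        (iadd (integrable_const _) i1).integrableOn mE.compl fun ω _ => ?_
      have hpos : 0 < 2 * (G + 1) := by linarith
      rw [← sub_nonneg]
      have : (G + 1) / 2 + φ 0 ω ^ 2 / (2 * (G + 1)) - φ 0 ω = (φ 0 ω - (G + 1)) ^ 2 / (2 * (G + 1)) := by
        field_simp
        ring
      rw [this]
      positivity
    rw [integral_add (integrable_const _).integrableOn i1.integrableOn] at h1
    have h2 : ∫ ω in Eᶜ, φ 0 ω ^ 2 / (2 * (G + 1)) ∂P ≤ ∫ ω, φ 0 ω ^ 2 / (2 * (G + 1)) ∂P :=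
      setIntegral_le_integral i1 (Eventually.of_forall fun ω => by positivity)
    have h3 : ∫ ω, φ 0 ω ^ 2 / (2 * (G + 1)) ∂P = G / (2 * (G + 1)) := integral_div _ _
    simp only [integral_const, smul_eq_mul, measureReal_restrict_apply_univ] at h1
    linarith
  have hq : G / (2 * (G + 1)) ≤ 1 / 2 := by
    rw [div_le_div_iff₀ (by linarith) (by norm_num)]
    linarith
  rw [hmean] at hsplit
  rw [div_le_iff₀ (by linarith)]
  nlinarith

theorem bdd (hd : 3 ≤ d) {P : Measure Ω} [IsProbabilityMeasure P] {φ : V d → Ω → ℝ}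
    {C : V d → V d → ℝ} (hφ : IsCGF P φ C) (hcov : ∀ x y, ∫ ω, φ x ω * φ y ω ∂P = Gf d x y) :
    BddBelow {h : ℝ |
    (⨅ R : ℕ, P {ω | ConnIn (lvl φ h ω) (box d ((R : ℝ) + 1)) (bdry d (2 * ((R : ℝ) + 1)))}) = 0} := by
  refine ⟨-1, fun h hh => ?_⟩
  by_contra! hlt
  have : ENNReal.ofReal (1 / ((∫ ω, φ 0 ω ^ 2 ∂P) + 3)) ≤ 0 := by
    rw [← hh]
    refine le_iInf fun R => (cross_low hd hφ hcov R).trans (measure_mono fun ω hω => ?_)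
    exact ConnIn.mono hω fun z hz => hlt.le.trans hz
  have hG0 : 0 ≤ ∫ ω, φ 0 ω ^ 2 ∂P := integral_nonneg fun ω => sq_nonneg _
  have hpos : (0 : ℝ) < 1 / ((∫ ω, φ 0 ω ^ 2 ∂P) + 3) := by positivity
  exact absurd (ENNReal.ofReal_eq_zero.1 (le_antisymm this bot_le)) (not_le.2 hpos)

end PartD2

/-- Lemma 3.3: polynomial lower bound for two-point connection probabilities of
`{φ^L ≥ h}` in `B_{2L}`, for `h < h_{**}`. -/
theorem two_point_lower_bound (d : ℕ) (hd : 3 ≤ d) {Ω : Type*} [MeasurableSpace Ω]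
    (P : Measure Ω) [IsProbabilityMeasure P] (φ : V d → Ω → ℝ) (φL : ℕ → V d → Ω → ℝ)
    (hφ : IsGFF P φ) (hcoup : IsTruncCoupling d P φ φL) :
    ∃ C₁ : ℝ, 0 < C₁ ∧
      ∀ h : ℝ, h < hStarStar d P φ →
        ∃ c : ℝ, 0 < c ∧
          ∀ L : ℕ, 1 ≤ L → ∀ x ∈ boxI (0 : V d) L, ∀ y ∈ boxI (0 : V d) L,
            ENNReal.ofReal (c * (L : ℝ) ^ (-C₁)) ≤
              P {ω | ConnIn ({z | h ≤ φL L z ω} ∩ boxI (0 : V d) (2 * L)) {x} {y}} := by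
  have hcov := phi_cov hd hcoup
  refine ⟨2 * d * (4 * d + 1), by positivity, fun h hh => ?_⟩
  obtain ⟨h', hh1, hh2⟩ := exists_between hh
  have hn := notMem_of_lt_csInf hh2 (bdd hd hφ hcov)
  set I : ENNReal := ⨅ R : ℕ, P {ω | ConnIn (lvl φ h' ω) (box d ((R : ℝ) + 1))
    (bdry d (2 * ((R : ℝ) + 1)))} with hI
  have hn0 : I ≠ 0 := hn
  have hle : ∀ R : ℕ, I ≤ P {ω | ConnIn (lvl φ h' ω) (box d ((R : ℝ) + 1))
    (bdry d (2 * ((R : ℝ) + 1)))} := fun R => iInf_le _ R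
  have htop : I ≠ ⊤ := ne_top_of_le_ne_top (measure_ne_top P _) (hle 0)
  exact main_cond hd hcoup hh1 (ENNReal.toReal_pos hn0 htop) fun R => by
    rw [ENNReal.ofReal_toReal htop]
    exact hle R

end
end GFFperc
end

section
/- Let Γ ≥ 1 and c₁ > 0 satisfy (1/4)c₁Γ³ ≤ 1/2 and c₁Γ ≤ 1/2, and let (q_n)_{n≥0} be nonnegative real numbers with q₀ ≤ (1/2)Γc₁ and q_n ≤ (1/4)Γ²q_{n−1}² + (1/2)Γc₁·2^{−2^n} for every n ≥ 1. Then q_n ≤ c₁Γ·2^{−2^n} ≤ (1/2)·2^{−2^n} for every n ≥ 1. -/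
/-- The real-analytic induction underlying the renormalisation scheme: a nonnegative
sequence `(q_n)` satisfying a quadratic recursion with doubly-exponentially small additive
error decays doubly exponentially. -/
theorem renormalisation_induction (Γ c₁ : ℝ) (hΓ : 1 ≤ Γ) (hc₁ : 0 < c₁)
    (h1 : (1 / 4) * c₁ * Γ ^ 3 ≤ 1 / 2) (h2 : c₁ * Γ ≤ 1 / 2)
    (q : ℕ → ℝ) (hq : ∀ n, 0 ≤ q n)
    (h0 : q 0 ≤ (1 / 2) * Γ * c₁)
    (hrec : ∀ n : ℕ, 1 ≤ n →
      q n ≤ (1 / 4) * Γ ^ 2 * q (n - 1) ^ 2 + (1 / 2) * Γ * c₁ * ((1 : ℝ) / 2) ^ 2 ^ n) :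
    ∀ n : ℕ, 1 ≤ n →
      q n ≤ c₁ * Γ * ((1 : ℝ) / 2) ^ 2 ^ n ∧
        c₁ * Γ * ((1 : ℝ) / 2) ^ 2 ^ n ≤ (1 / 2) * ((1 : ℝ) / 2) ^ 2 ^ n := by
  have hpos : 0 < c₁ * Γ := by positivity
  have key : ∀ n : ℕ, q n ≤ c₁ * Γ * ((1 : ℝ) / 2) ^ 2 ^ n := by
    intro n
    induction n with
    | zero => norm_num; linarith
    | succ k ih =>
      have h := hrec (k + 1) (by omega)
      rw [Nat.add_sub_cancel] at h
      have hx : ((1 : ℝ) / 2) ^ 2 ^ (k + 1) = (((1 : ℝ) / 2) ^ 2 ^ k) ^ 2 := by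
        rw [← pow_mul, pow_succ]
      rw [hx] at h ⊢
      generalize ((1 : ℝ) / 2) ^ 2 ^ k = x at *
      have hs : q k ^ 2 ≤ (c₁ * Γ * x) ^ 2 := pow_le_pow_left₀ (hq k) ih 2
      have hs2 : (1 / 4) * Γ ^ 2 * q k ^ 2 ≤ (1 / 4) * Γ ^ 2 * (c₁ * Γ * x) ^ 2 :=
        mul_le_mul_of_nonneg_left hs (by positivity)
      have hs3 : (1 / 4) * c₁ * Γ ^ 3 * (c₁ * Γ * x ^ 2) ≤ 1 / 2 * (c₁ * Γ * x ^ 2) :=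
        mul_le_mul_of_nonneg_right h1 (by positivity)
      linarith
  intro n _
  exact ⟨key n, mul_le_mul_of_nonneg_right h2 (by positivity)⟩
end
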